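/- arXiv:1009.4736 — 2 statements merged into one kernel-verified Lean document; each statement's English description precedes it below -/
import Mathlib

section
/- N_15^{aa}(Π) ≤ 19, N_15^{bb}(Π) ≤ 19 and N_15^{cc}(Π) ≤ 19. -/
/-- An `n`-half-period: a sequence `π_0, …, π_{n(n-1)/2}` of arrangements of `n`
labeled elements in the positions `1, …, n` (recorded by `pos t x` = the position of
element `x` at time `t`), in which consecutive arrangements differ by a transposition
of the elements in two adjacent positions, and the last arrangement is the reverse of
the first. -/
structure HalfPeriod (n : ℕ) where
  pos : ℕ → Fin n → ℕ
  pos_mem : ∀ t, t ≤ n * (n - 1) / 2 → ∀ x, 1 ≤ pos t x ∧ pos t x ≤ n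
  pos_inj : ∀ t, t ≤ n * (n - 1) / 2 → Function.Injective (pos t)
  step : ∀ t, t < n * (n - 1) / 2 → ∃ x y : Fin n,
    pos t y = pos t x + 1 ∧ pos (t + 1) x = pos t x + 1 ∧ pos (t + 1) y = pos t x ∧
    ∀ z, z ≠ x → z ≠ y → pos (t + 1) z = pos t z
  reverse : ∀ x, pos (n * (n - 1) / 2) x = n + 1 - pos 0 x

namespace HalfPeriod

variable {n : ℕ}

/-- The number of transposition steps of an `n`-half-period. -/
def steps (n : ℕ) : ℕ := n * (n - 1) / 2

/-- Element `x` moves (changes position) at step `t`. -/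
def Moved (hp : HalfPeriod n) (t : ℕ) (x : Fin n) : Prop :=
  hp.pos (t + 1) x ≠ hp.pos t x

/-- Step `t` is the transposition of the (distinct) elements `x` and `y`. -/
def SwapsAt (hp : HalfPeriod n) (t : ℕ) (x y : Fin n) : Prop :=
  x ≠ y ∧ hp.Moved t x ∧ hp.Moved t y

/-- Step `t` is an `i`-transposition: it swaps the elements at positions `i` and `i+1`. -/
def GateAt (hp : HalfPeriod n) (t i : ℕ) : Prop :=
  ∃ x y : Fin n, hp.pos t x = i ∧ hp.pos t y = i + 1 ∧
    hp.pos (t + 1) x = i + 1 ∧ hp.pos (t + 1) y = i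

/-- Step `t` is an `i`-critical transposition: an `i`- or an `(n-i)`-transposition. -/
def Critical (hp : HalfPeriod n) (t i : ℕ) : Prop :=
  hp.GateAt t i ∨ hp.GateAt t (n - i)

/-- Step `t` is a `(≤ k)`-critical transposition. -/
def LeCritical (hp : HalfPeriod n) (t k : ℕ) : Prop :=
  ∃ i, 1 ≤ i ∧ i ≤ k ∧ hp.Critical t i

/-- `N_{≤ k}`: the number of `(≤ k)`-critical transpositions of the half-period. -/
noncomputable def NLe (hp : HalfPeriod n) (k : ℕ) : ℕ :=
  {t : ℕ | t < steps n ∧ hp.LeCritical t k}.ncard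

end HalfPeriod
/-- `hp` is a 3-decomposable `30`-half-period, witnessed by the labeling
`A = {a 0, …, a 9}`, `B = {b 0, …, b 9}`, `C = {c 0, …, c 9}` (the element with
1-indexed subscript `j` is `a (j-1)`, etc.): the initial arrangement is
`(a_10, a_9, …, a_1, b_1, …, b_10, c_1, …, c_10)`, every transposition between `A`
and `B` occurs before every transposition between `C` and `A ∪ B`, and every
transposition between `A` and `C` occurs before every transposition between `B`
and `C`. -/
def IsThreeDecompLabeling30 (hp : HalfPeriod 30) (a b c : Fin 10 → Fin 30) : Prop :=
  Function.Injective (Sum.elim a (Sum.elim b c)) ∧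
  (∀ i : Fin 10, hp.pos 0 (a i) = 10 - (i : ℕ)) ∧
  (∀ i : Fin 10, hp.pos 0 (b i) = 11 + (i : ℕ)) ∧
  (∀ i : Fin 10, hp.pos 0 (c i) = 21 + (i : ℕ)) ∧
  (∀ s t, s < HalfPeriod.steps 30 → t < HalfPeriod.steps 30 →
    (∃ i j, hp.SwapsAt s (a i) (b j)) →
    (∃ i x, ((∃ j, x = a j) ∨ (∃ j, x = b j)) ∧ hp.SwapsAt t (c i) x) → s < t) ∧
  (∀ s t, s < HalfPeriod.steps 30 → t < HalfPeriod.steps 30 →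
    (∃ i j, hp.SwapsAt s (a i) (c j)) →
    (∃ i j, hp.SwapsAt t (b i) (c j)) → s < t)

/-- `x` and `y` belong to the same one of the three classes `A`, `B`, `C`. -/
def SameClass (a b c : Fin 10 → Fin 30) (x y : Fin 30) : Prop :=
  (∃ i j, x = a i ∧ y = a j) ∨ (∃ i j, x = b i ∧ y = b j) ∨ (∃ i j, x = c i ∧ y = c j)
/-- `hal(x_{j+1})`: the number of indices `i < j` such that the transposition between
`x j` and `x i` occurs in the 15th gate (swaps positions `15` and `16`). -/
noncomputable def halOf (hp : HalfPeriod 30) (x : Fin 10 → Fin 30) (j : Fin 10) : ℕ :=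
  {i : Fin 10 | i < j ∧ ∃ t, t < HalfPeriod.steps 30 ∧ hp.GateAt t 15 ∧
    hp.SwapsAt t (x j) (x i)}.ncard

/-- `N_15^{xx}`: the number of 15-transpositions between two elements of the class `x`. -/
noncomputable def N15Mono (hp : HalfPeriod 30) (x : Fin 10 → Fin 30) : ℕ :=
  {t : ℕ | t < HalfPeriod.steps 30 ∧ hp.GateAt t 15 ∧ ∃ i j, hp.SwapsAt t (x i) (x j)}.ncard

structure Trk where
  M : ℕ
  W : ℕ → Fin 10 → ℕ
  rng : ∀ t, t ≤ M → ∀ i, 1 ≤ W t i ∧ W t i ≤ 30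
  inj : ∀ t, t ≤ M → ∀ i j, W t i = W t j → i = j
  step : ∀ t, t < M → (∀ i, W (t + 1) i = W t i) ∨
    (∃ j, W (t + 1) j = W t j + 1 ∧ ∀ i, i ≠ j → W (t + 1) i = W t i) ∨
    (∃ i j, i < j ∧ W t i = W t j + 1 ∧ W (t + 1) i = W t j ∧ W (t + 1) j = W t j + 1 ∧
      ∀ k, k ≠ i → k ≠ j → W (t + 1) k = W t k)
  start : ∀ i, W 0 i = 10 - (i : ℕ)
  fin : ∀ i, W M i = 21 + (i : ℕ)

namespace Trk

variable (K : Trk)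

def Sw (t : ℕ) (i j : Fin 10) : Prop :=
  i < j ∧ K.W t i = K.W t j + 1 ∧ K.W (t + 1) i = K.W t j ∧ K.W (t + 1) j = K.W t j + 1

lemma ord_step {t : ℕ} (ht : t < K.M) {i j : Fin 10} (hij : i < j) (h : K.W t i < K.W t j) :
    K.W (t + 1) i < K.W (t + 1) j := by
  have hinj := K.inj (t + 1) ht i j
  have hne : i ≠ j := hij.ne
  rcases K.step t ht with h1 | ⟨k, h1, h2⟩ | ⟨p, q, hpq, h1, h2, h3, h4⟩
  · rw [h1, h1]; exact h
  · by_cases hi : i = k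
    · subst hi
      have := h2 j hne.symm
      have : K.W (t + 1) i ≠ K.W (t + 1) j := fun h => hne (hinj h)
      omega
    · have := h2 i hi
      by_cases hj : j = k
      · subst hj; omega
      · have := h2 j hj; omega
  · have hh : K.W (t + 1) i ≠ K.W (t + 1) j := fun h => hne (hinj h)
    by_cases hip : i = p
    · subst hip
      by_cases hjq : j = q
      · subst hjq; omega
      · have := h4 j hne.symm hjq; omega
    · by_cases hiq : i = q
      · subst hiq
        by_cases hjp : j = p
        · subst hjp; exact absurd hpq (not_lt.mpr hij.le)
        · have := h4 j hjp hne.symm; omega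
      · have := h4 i hip hiq
        by_cases hjp : j = p
        · subst hjp; omega
        · by_cases hjq : j = q
          · subst hjq; omega
          · have := h4 j hjp hjq; omega

lemma ord_mono {i j : Fin 10} (hij : i < j) {t t' : ℕ} (htt : t ≤ t') (ht' : t' ≤ K.M)
    (h : K.W t i < K.W t j) : K.W t' i < K.W t' j := by
  induction t', htt using Nat.le_induction with
  | base => exact h
  | succ n hn ih => exact K.ord_step (by omega) hij (ih (by omega))

lemma exists_sw {i j : Fin 10} (hij : i < j) : ∃ t, t < K.M ∧ K.Sw t i j := by
  classical
  have hne : i ≠ j := hij.ne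
  have hij' : (i : ℕ) < j := hij
  have hex : ∃ t, t ≤ K.M ∧ K.W t i < K.W t j := ⟨K.M, le_rfl, by rw [K.fin, K.fin]; omega⟩
  obtain ⟨hle, hlt⟩ := Nat.find_spec hex
  have hmin := fun m => Nat.find_min hex (m := m)
  generalize Nat.find hex = n at hle hlt hmin
  rcases n with _ | s
  · rw [K.start, K.start] at hlt
    have := j.2
    omega
  · refine ⟨s, by omega, hij, ?_⟩
    have h0 := hmin s (by omega)
    have h1 : K.W s j < K.W s i := by
      have := K.inj s (by omega) i j
      have : K.W s i ≠ K.W s j := fun h => hne (this h)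
      have : ¬ K.W s i < K.W s j := fun h => h0 ⟨by omega, h⟩
      omega
    rcases K.step s (by omega) with h2 | ⟨k, h2, h3⟩ | ⟨p, q, hpq, h2, h3, h4, h5⟩
    · rw [h2, h2] at hlt; omega
    · exfalso
      by_cases hi : i = k
      · subst hi
        have := h3 j hne.symm
        omega
      · have := h3 i hi
        by_cases hj : j = k
        · subst hj; omega
        · have := h3 j hj; omega
    · by_cases hip : i = p
      · subst hip
        by_cases hjq : j = q
        · subst hjq; omega
        · have := h5 j hne.symm hjq
          have := K.inj s (by omega) q j
          have : K.W s q ≠ K.W s j := fun h => hjq (this h).symm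
          omega
      · by_cases hiq : i = q
        · subst hiq
          by_cases hjp : j = p
          · subst hjp; exact absurd hpq (not_lt.mpr hij.le)
          · have := h5 j hjp hne.symm; omega
        · have := h5 i hip hiq
          by_cases hjp : j = p
          · subst hjp; omega
          · by_cases hjq : j = q
            · subst hjq
              have := K.inj s (by omega) p i
              have : K.W s p ≠ K.W s i := fun h => hip (this h).symm
              omega
            · have := h5 j hjp hjq; omega

open Classical in
noncomputable def tau (i j : Fin 10) : ℕ := if h : i < j then (K.exists_sw h).choose else 0

noncomputable def gam (i j : Fin 10) : ℕ := K.W (K.tau i j) j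

lemma tau_spec {i j : Fin 10} (h : i < j) : K.tau i j < K.M ∧ K.Sw (K.tau i j) i j := by
  unfold tau
  rw [dif_pos h]
  exact (K.exists_sw h).choose_spec

lemma ord_after {i j : Fin 10} (h : i < j) {t : ℕ} (h1 : K.tau i j < t) (h2 : t ≤ K.M) :
    K.W t i < K.W t j := by
  obtain ⟨ht, hs⟩ := K.tau_spec h
  refine K.ord_mono h (t := K.tau i j + 1) h1 h2 ?_
  obtain ⟨_, a, b, c⟩ := hs
  omega

lemma ord_before {i j : Fin 10} (h : i < j) {t : ℕ} (h1 : t ≤ K.tau i j) :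
    K.W t j < K.W t i := by
  obtain ⟨ht, hs⟩ := K.tau_spec h
  have hinj := K.inj t (by omega) i j
  have hne : K.W t i ≠ K.W t j := fun e => h.ne (hinj e)
  by_contra hc
  have := K.ord_mono h h1 ht.le (by omega)
  obtain ⟨_, a, b, c⟩ := hs
  omega

lemma tau_eq {i j : Fin 10} {t : ℕ} (ht : t < K.M) (h : K.Sw t i j) : t = K.tau i j := by
  obtain ⟨hij, a, b, c⟩ := h
  rcases lt_trichotomy t (K.tau i j) with h1 | h1 | h1
  · have := K.ord_before hij (t := t + 1) h1
    omega
  · exact h1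
  · have := K.ord_after hij h1 ht.le
    omega

lemma sw_unique {i j p q : Fin 10} {t : ℕ} (ht : t < K.M) (h : K.Sw t i j) (h' : K.Sw t p q) :
    i = p ∧ j = q := by
  obtain ⟨hij, a, b, c⟩ := h
  obtain ⟨hpq, a', b', c'⟩ := h'
  have key : ∀ i j, K.Sw t i j → ∀ k, K.W (t + 1) k ≠ K.W t k → k = i ∨ k = j := by
    rintro i j ⟨hij, a, b, c⟩ k hk
    rcases K.step t ht with h1 | ⟨l, h1, h2⟩ | ⟨p, q, hpq, h1, h2, h3, h4⟩
    · exact absurd (h1 k) hk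
    · by_cases hi : i = l
      · subst hi; omega
      · have := h2 i hi; omega
    · have h5 : i = p ∨ i = q := by
        by_contra hc; push Not at hc; have := h4 i hc.1 hc.2; omega
      have h6 : j = p ∨ j = q := by
        by_contra hc; push Not at hc; have := h4 j hc.1 hc.2; omega
      have h7 : k = p ∨ k = q := by
        by_contra hc; push Not at hc; have := h4 k hc.1 hc.2; omega
      have := hij.ne
      grind
  have h1 := key i j ⟨hij, a, b, c⟩ p (by omega)
  have h2 := key i j ⟨hij, a, b, c⟩ q (by omega)
  rcases h1 with h1 | h1 <;> rcases h2 with h2 | h2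
  · subst h1; subst h2; exact absurd hpq (lt_irrefl _)
  · exact ⟨h1.symm, h2.symm⟩
  · subst h1; subst h2; exact absurd hpq (not_lt.mpr hij.le)
  · subst h1; subst h2; exact absurd hpq (lt_irrefl _)

end Trk
namespace Trk

variable (K : Trk)

def Up (Q : Finset (Fin 10)) (g t : ℕ) : Prop :=
  ∃ i j, K.Sw t i j ∧ K.W t j = g ∧ j ∈ Q ∧ i ∉ Q

def Dn (Q : Finset (Fin 10)) (g t : ℕ) : Prop :=
  ∃ i j, K.Sw t i j ∧ K.W t j = g ∧ i ∈ Q ∧ j ∉ Q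

def Phi (Q : Finset (Fin 10)) (g t : ℕ) : ℕ :=
  ∑ k : Fin 10, if k ∈ Q ∧ g < K.W t k then 1 else 0

lemma Phi_le (Q : Finset (Fin 10)) (g t : ℕ) : K.Phi Q g t ≤ Q.card := by
  unfold Phi
  rw [← Finset.card_filter]
  apply Finset.card_le_card
  intro x hx
  simp at hx
  exact hx.1

open Classical in
lemma flow_step (Q : Finset (Fin 10)) (g t : ℕ) (ht : t < K.M) :
    K.Phi Q g t + (if K.Up Q g t then 1 else 0) ≤
      K.Phi Q g (t + 1) + (if K.Dn Q g t then 1 else 0) := by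
  rcases K.step t ht with h1 | ⟨l, h1, h2⟩ | ⟨p, q, hpq, h1, h2, h3, h4⟩
  · have hu : ¬ K.Up Q g t := by
      rintro ⟨i, j, ⟨_, a, b, c⟩, _⟩
      have := h1 i; omega
    have : K.Phi Q g t = K.Phi Q g (t + 1) := by
      unfold Phi
      apply Finset.sum_congr rfl
      intro k _
      rw [h1 k]
    rw [if_neg hu, this]; omega
  · have hu : ¬ K.Up Q g t := by
      rintro ⟨i, j, ⟨_, a, b, c⟩, _⟩
      by_cases hi : i = l
      · subst hi; omega
      · have := h2 i hi; omega
    have : K.Phi Q g t ≤ K.Phi Q g (t + 1) := by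
      unfold Phi
      apply Finset.sum_le_sum
      intro k _
      have : K.W t k ≤ K.W (t + 1) k := by
        by_cases hk : k = l
        · subst hk; omega
        · rw [h2 k hk]
      split_ifs with a b
      · exact le_rfl
      · exact absurd ⟨a.1, lt_of_lt_of_le a.2 this⟩ b
      · omega
      · omega
    rw [if_neg hu]; omega
  · have hsw : K.Sw t p q := ⟨hpq, h1, h2, h3⟩
    have hu : K.Up Q g t ↔ (K.W t q = g ∧ q ∈ Q ∧ p ∉ Q) := by
      constructor
      · rintro ⟨i, j, hs, a, b, c⟩
        obtain ⟨rfl, rfl⟩ := K.sw_unique ht hs hsw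
        exact ⟨a, b, c⟩
      · rintro ⟨a, b, c⟩
        exact ⟨p, q, hsw, a, b, c⟩
    have hd : K.Dn Q g t ↔ (K.W t q = g ∧ p ∈ Q ∧ q ∉ Q) := by
      constructor
      · rintro ⟨i, j, hs, a, b, c⟩
        obtain ⟨rfl, rfl⟩ := K.sw_unique ht hs hsw
        exact ⟨a, b, c⟩
      · rintro ⟨a, b, c⟩
        exact ⟨p, q, hsw, a, b, c⟩
    have split : ∀ f : Fin 10 → ℕ, ∑ k, f k =
        f p + (f q + ∑ k ∈ (Finset.univ.erase p).erase q, f k) := by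
      intro f
      rw [Finset.add_sum_erase _ f (by simp [hpq.ne']), Finset.add_sum_erase _ f (by simp)]
    unfold Phi
    rw [split, split]
    have hrest : ∑ k ∈ (Finset.univ.erase p).erase q, (if k ∈ Q ∧ g < K.W t k then 1 else 0) =
        ∑ k ∈ (Finset.univ.erase p).erase q, (if k ∈ Q ∧ g < K.W (t + 1) k then 1 else 0) := by
      apply Finset.sum_congr rfl
      intro k hk
      simp at hk
      rw [h4 k hk.2 hk.1]
    rw [hrest, hu, hd, h1, h2, h3]
    generalize K.W t q = w
    generalize ∑ k ∈ (Finset.univ.erase p).erase q,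
      (if k ∈ Q ∧ g < K.W (t + 1) k then 1 else 0) = r
    by_cases hp : p ∈ Q <;> by_cases hq : q ∈ Q <;> simp [hp, hq] <;> split_ifs <;> omega

open Classical in
lemma flow (Q : Finset (Fin 10)) (g : ℕ) {s s' : ℕ} (hs : s ≤ s') (hM : s' ≤ K.M) :
    K.Phi Q g s + ((Finset.Ico s s').filter (K.Up Q g)).card ≤
      K.Phi Q g s' + ((Finset.Ico s s').filter (K.Dn Q g)).card := by
  induction s', hs using Nat.le_induction with
  | base => simp
  | succ n hn ih =>
    have h1 := ih (by omega)
    have h2 := K.flow_step Q g n (by omega)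
    rw [Finset.card_filter, Finset.card_filter] at h1 ⊢
    rw [Finset.sum_Ico_succ_top hn, Finset.sum_Ico_succ_top hn]
    omega

def pairs : Finset (Fin 10 × Fin 10) := Finset.univ.filter fun p => p.1 < p.2

lemma mem_pairs {p : Fin 10 × Fin 10} : p ∈ pairs ↔ p.1 < p.2 := by simp [pairs]

open Classical in
lemma flow_pairs (Q : Finset (Fin 10)) (g : ℕ) {s s' : ℕ} (hs : s ≤ s') (hM : s' ≤ K.M) :
    (pairs.filter fun p => p.2 ∈ Q ∧ p.1 ∉ Q ∧ K.gam p.1 p.2 = g ∧ s ≤ K.tau p.1 p.2 ∧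
      K.tau p.1 p.2 < s').card ≤
    Q.card + (pairs.filter fun p => p.1 ∈ Q ∧ p.2 ∉ Q ∧ K.gam p.1 p.2 = g ∧
      s ≤ K.tau p.1 p.2 ∧ K.tau p.1 p.2 < s').card := by
  have h := K.flow Q g hs hM
  have h1 := K.Phi_le Q g s'
  have h2 : (pairs.filter fun p => p.2 ∈ Q ∧ p.1 ∉ Q ∧ K.gam p.1 p.2 = g ∧
      s ≤ K.tau p.1 p.2 ∧ K.tau p.1 p.2 < s').card ≤
      ((Finset.Ico s s').filter (K.Up Q g)).card := by
    apply Finset.card_le_card_of_injOn (fun p => K.tau p.1 p.2)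
    · intro p hp
      simp only [Finset.coe_filter, Set.mem_ofPred_eq, mem_pairs, Finset.mem_Ico] at hp ⊢
      obtain ⟨a, b, c, d, e, f⟩ := hp
      exact ⟨⟨e, f⟩, p.1, p.2, (K.tau_spec a).2, d, b, c⟩
    · intro p hp q hq hpq
      simp only [Finset.coe_filter, Set.mem_ofPred_eq, mem_pairs] at hp hq hpq
      have a := K.tau_spec hp.1
      have b := K.tau_spec hq.1
      rw [← hpq] at b
      have := K.sw_unique a.1 a.2 b.2
      exact Prod.ext this.1 this.2
  have h3 : ((Finset.Ico s s').filter (K.Dn Q g)).card ≤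
      (pairs.filter fun p => p.1 ∈ Q ∧ p.2 ∉ Q ∧ K.gam p.1 p.2 = g ∧
      s ≤ K.tau p.1 p.2 ∧ K.tau p.1 p.2 < s').card := by
    apply Finset.card_le_card_of_surjOn (fun p => K.tau p.1 p.2)
    intro t ht
    simp only [Finset.coe_filter, Set.mem_ofPred_eq, Finset.mem_Ico] at ht
    obtain ⟨⟨h1, h2⟩, i, j, hs, a, b, c⟩ := ht
    have e := K.tau_eq (by omega) hs
    refine ⟨(i, j), ?_, e.symm⟩
    simp only [Finset.coe_filter, Set.mem_ofPred_eq, mem_pairs]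
    refine ⟨hs.1, b, c, ?_, ?_, ?_⟩
    · unfold gam; rw [← e]; exact a
    · omega
    · omega
  omega

end Trk
namespace Trk

variable (K : Trk)

noncomputable def R (g : ℕ) (j : Fin 10) : ℕ :=
  (Finset.univ.filter fun i : Fin 10 => i < j ∧ K.gam i j = g).card

noncomputable def L (g : ℕ) (j : Fin 10) : ℕ :=
  (Finset.univ.filter fun k : Fin 10 => j < k ∧ K.gam j k = g).card

noncomputable def D (g : ℕ) : ℕ := (pairs.filter fun p => K.gam p.1 p.2 = g).card

lemma RL (g : ℕ) (j : Fin 10) : K.R g j ≤ 1 + K.L g j := by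
  classical
  have h := K.flow_pairs {j} g (Nat.zero_le K.M) le_rfl
  rw [Finset.card_singleton] at h
  have h1 : K.R g j ≤ (pairs.filter fun p => p.2 ∈ ({j} : Finset (Fin 10)) ∧
      p.1 ∉ ({j} : Finset (Fin 10)) ∧ K.gam p.1 p.2 = g ∧ 0 ≤ K.tau p.1 p.2 ∧
      K.tau p.1 p.2 < K.M).card := by
    apply Finset.card_le_card_of_injOn (fun i => (i, j))
    · intro i hi
      simp only [Finset.coe_filter, Set.mem_ofPred_eq, Finset.mem_univ, true_and] at hi
      simp only [Finset.coe_filter, Set.mem_ofPred_eq, mem_pairs, Finset.mem_singleton]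
      exact ⟨hi.1, trivial, hi.1.ne, hi.2, Nat.zero_le _, (K.tau_spec hi.1).1⟩
    · intro i _ i' _ h
      exact (Prod.ext_iff.mp h).1
  have h2 : (pairs.filter fun p => p.1 ∈ ({j} : Finset (Fin 10)) ∧
      p.2 ∉ ({j} : Finset (Fin 10)) ∧ K.gam p.1 p.2 = g ∧ 0 ≤ K.tau p.1 p.2 ∧
      K.tau p.1 p.2 < K.M).card ≤ K.L g j := by
    apply Finset.card_le_card_of_injOn (fun p => p.2)
    · intro p hp
      simp only [Finset.coe_filter, Set.mem_ofPred_eq, mem_pairs, Finset.mem_singleton] at hp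
      simp only [Finset.coe_filter, Set.mem_ofPred_eq, Finset.mem_univ, true_and]
      obtain ⟨a, b, c, d, e⟩ := hp
      rw [b] at a d
      exact ⟨a, d⟩
    · intro p hp q hq h
      simp only [Finset.coe_filter, Set.mem_ofPred_eq, mem_pairs, Finset.mem_singleton] at hp hq
      exact Prod.ext (hp.2.1.trans hq.2.1.symm) h
  omega

lemma D_eq (g : ℕ) : K.D g = ∑ j, K.R g j := by
  classical
  unfold D R
  rw [Finset.card_eq_sum_card_fiberwise (f := fun p => p.2) (t := Finset.univ) (by simp)]
  apply Finset.sum_congr rfl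
  intro j _
  refine Finset.card_bij (fun p _ => p.1) ?_ ?_ ?_
  · intro p hp
    simp only [Finset.mem_filter, mem_pairs] at hp
    obtain ⟨⟨a, b⟩, c⟩ := hp
    subst c
    simp [a, b]
  · intro p hp q hq h
    simp only [Finset.mem_filter] at hp hq
    exact Prod.ext h (hp.2.trans hq.2.symm)
  · intro i hi
    simp only [Finset.mem_filter, Finset.mem_univ, true_and] at hi
    exact ⟨(i, j), by simp [mem_pairs, hi.1, hi.2], rfl⟩

lemma sumR (F : ∀ i j, i < j → K.gam i j ∈ Finset.Icc 11 19) (j : Fin 10) :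
    ∑ g ∈ Finset.Icc 11 19, K.R g j = j := by
  classical
  have h := Finset.card_eq_sum_card_fiberwise (f := fun i => K.gam i j)
    (s := Finset.univ.filter fun i : Fin 10 => i < j) (t := Finset.Icc 11 19)
    (by intro i hi; simp at hi; exact F i j hi)
  have h2 : (Finset.univ.filter fun i : Fin 10 => i < j).card = j := by
    clear h; revert j; decide
  rw [h2] at h
  rw [h]
  apply Finset.sum_congr rfl
  intro g _
  unfold R
  rw [Finset.filter_filter]

lemma sumL (F : ∀ i j, i < j → K.gam i j ∈ Finset.Icc 11 19) (j : Fin 10) :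
    ∑ g ∈ Finset.Icc 11 19, K.L g j = 9 - (j : ℕ) := by
  classical
  have h := Finset.card_eq_sum_card_fiberwise (f := fun i => K.gam j i)
    (s := Finset.univ.filter fun i : Fin 10 => j < i) (t := Finset.Icc 11 19)
    (by intro i hi; simp at hi; exact F j i hi)
  have h2 : (Finset.univ.filter fun i : Fin 10 => j < i).card = 9 - (j : ℕ) := by
    clear h; revert j; decide
  rw [h2] at h
  rw [h]
  apply Finset.sum_congr rfl
  intro g _
  unfold L
  rw [Finset.filter_filter]

lemma Icc_exp (f : ℕ → ℕ) : ∑ g ∈ Finset.Icc 11 19, f g =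
    f 11 + f 12 + f 13 + f 14 + f 15 + f 16 + f 17 + f 18 + f 19 := by
  simp [Finset.sum_Icc_succ_top]

lemma D_exp (g : ℕ) : K.D g = K.R g 0 + K.R g 1 + K.R g 2 + K.R g 3 + K.R g 4 + K.R g 5
    + K.R g 6 + K.R g 7 + K.R g 8 + K.R g 9 := by
  rw [D_eq]; simp [Fin.sum_univ_succ]; ring_nf

lemma stage1 (F : ∀ i j, i < j → K.gam i j ∈ Finset.Icc 11 19) :
    ∀ g ∈ Finset.Icc 11 19, K.R g 9 = 1 := by
  have h1 := K.sumR F 9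
  have h2 := K.sumL F 9
  rw [Icc_exp] at h1 h2
  have e : ((9 : Fin 10) : ℕ) = 9 := rfl
  rw [e] at h1 h2
  have a1 := K.RL 11 9
  have a2 := K.RL 12 9
  have a3 := K.RL 13 9
  have a4 := K.RL 14 9
  have a5 := K.RL 15 9
  have a6 := K.RL 16 9
  have a7 := K.RL 17 9
  have a8 := K.RL 18 9
  have a9 := K.RL 19 9
  intro g hg
  rw [Finset.mem_Icc] at hg
  obtain ⟨l, u⟩ := hg
  interval_cases g <;> omega

lemma low1 (F : ∀ i j, i < j → K.gam i j ∈ Finset.Icc 11 19) : 2 ≤ K.D 11 + K.D 19 := by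
  have h1 := K.stage1 F 11 (by simp)
  have h2 := K.stage1 F 19 (by simp)
  have := K.D_exp 11
  have := K.D_exp 19
  omega

lemma stage2 (F : ∀ i j, i < j → K.gam i j ∈ Finset.Icc 11 19) (E1 : K.D 11 + K.D 19 = 2) :
    K.L 11 8 = 0 ∧ K.L 19 8 = 0 ∧ (∀ g ∈ Finset.Icc 12 18, K.R g 8 = 1 + K.L g 8) := by
  have z1 := K.stage1 F 11 (by simp)
  have z2 := K.stage1 F 19 (by simp)
  have := K.D_exp 11
  have := K.D_exp 19
  have h1 := K.sumR F 8
  have h2 := K.sumL F 8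
  rw [Icc_exp] at h1 h2
  have e : ((8 : Fin 10) : ℕ) = 8 := rfl
  rw [e] at h1 h2
  have a2 := K.RL 12 8
  have a3 := K.RL 13 8
  have a4 := K.RL 14 8
  have a5 := K.RL 15 8
  have a6 := K.RL 16 8
  have a7 := K.RL 17 8
  have a8 := K.RL 18 8
  refine ⟨by omega, by omega, ?_⟩
  intro g hg
  rw [Finset.mem_Icc] at hg
  obtain ⟨l, u⟩ := hg
  interval_cases g <;> omega

lemma low2 (F : ∀ i j, i < j → K.gam i j ∈ Finset.Icc 11 19) (E1 : K.D 11 + K.D 19 = 2) :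
    4 ≤ K.D 12 + K.D 18 := by
  have z1 := K.stage1 F 12 (by simp)
  have z2 := K.stage1 F 18 (by simp)
  obtain ⟨_, _, h⟩ := K.stage2 F E1
  have := h 12 (by simp)
  have := h 18 (by simp)
  have := K.D_exp 12
  have := K.D_exp 18
  omega

lemma stage3 (F : ∀ i j, i < j → K.gam i j ∈ Finset.Icc 11 19) (E1 : K.D 11 + K.D 19 = 2)
    (E2 : K.D 12 + K.D 18 = 4) :
    K.L 12 8 = 0 ∧ K.L 18 8 = 0 ∧
    (K.L 11 7 = 0 ∧ K.L 19 7 = 0 ∧ K.L 12 7 = 0 ∧ K.L 18 7 = 0) ∧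
    (∀ g ∈ Finset.Icc 13 17, K.R g 7 = 1 + K.L g 7) := by
  have z1 := K.stage1 F 11 (by simp)
  have z2 := K.stage1 F 19 (by simp)
  have z3 := K.stage1 F 12 (by simp)
  have z4 := K.stage1 F 18 (by simp)
  obtain ⟨_, _, h⟩ := K.stage2 F E1
  have := h 12 (by simp)
  have := h 18 (by simp)
  have := K.D_exp 11
  have := K.D_exp 19
  have := K.D_exp 12
  have := K.D_exp 18
  have h1 := K.sumR F 7
  have h2 := K.sumL F 7
  rw [Icc_exp] at h1 h2
  have e : ((7 : Fin 10) : ℕ) = 7 := rfl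
  rw [e] at h1 h2
  have a3 := K.RL 13 7
  have a4 := K.RL 14 7
  have a5 := K.RL 15 7
  have a6 := K.RL 16 7
  have a7 := K.RL 17 7
  refine ⟨by omega, by omega, ⟨by omega, by omega, by omega, by omega⟩, ?_⟩
  intro g hg
  rw [Finset.mem_Icc] at hg
  obtain ⟨l, u⟩ := hg
  interval_cases g <;> omega

lemma low3 (F : ∀ i j, i < j → K.gam i j ∈ Finset.Icc 11 19) (E1 : K.D 11 + K.D 19 = 2)
    (E2 : K.D 12 + K.D 18 = 4) : 6 ≤ K.D 13 + K.D 17 := by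
  have z1 := K.stage1 F 13 (by simp)
  have z2 := K.stage1 F 17 (by simp)
  obtain ⟨_, _, h⟩ := K.stage2 F E1
  have := h 13 (by simp)
  have := h 17 (by simp)
  obtain ⟨_, _, _, h⟩ := K.stage3 F E1 E2
  have := h 13 (by simp)
  have := h 17 (by simp)
  have := K.D_exp 13
  have := K.D_exp 17
  omega

lemma two_exp {g g' : ℕ} (h : K.R g 9 = 1) (h' : K.R g' 9 = 1) : K.D g + K.D g' = 2 →
    K.R g 6 = 0 ∧ K.R g' 6 = 0 := by
  rw [D_exp, D_exp]; omega

lemma four_exp {g g' : ℕ} (h : K.R g 9 = 1) (h' : K.R g' 9 = 1)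
    (h1 : K.R g 8 = 1 + K.L g 8) (h1' : K.R g' 8 = 1 + K.L g' 8) : K.D g + K.D g' = 4 →
    K.R g 6 = 0 ∧ K.R g' 6 = 0 := by
  rw [D_exp, D_exp]; omega

lemma six_exp {g g' : ℕ} (h : K.R g 9 = 1) (h' : K.R g' 9 = 1)
    (h1 : K.R g 8 = 1 + K.L g 8) (h1' : K.R g' 8 = 1 + K.L g' 8)
    (h2 : K.R g 7 = 1 + K.L g 7) (h2' : K.R g' 7 = 1 + K.L g' 7) : K.D g + K.D g' = 6 →
    K.R g 6 = 0 ∧ K.R g' 6 = 0 ∧ K.L g 8 = 0 ∧ K.L g' 8 = 0 ∧ K.L g 7 = 0 ∧ K.L g' 7 = 0 := by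
  rw [D_exp, D_exp]; omega

lemma stage4 (F : ∀ i j, i < j → K.gam i j ∈ Finset.Icc 11 19) (E1 : K.D 11 + K.D 19 = 2)
    (E2 : K.D 12 + K.D 18 = 4) (E3 : K.D 13 + K.D 17 = 6) :
    ∀ g ∈ Finset.Icc 11 19, g ∉ Finset.Icc 14 16 → K.L g 6 = 0 ∧ K.L g 7 = 0 ∧ K.L g 8 = 0 := by
  have z := K.stage1 F
  obtain ⟨p1, p2, h⟩ := K.stage2 F E1
  obtain ⟨p3, p4, ⟨p5, p6, p7, p8⟩, h'⟩ := K.stage3 F E1 E2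
  obtain ⟨r1, r2⟩ := K.two_exp (z 11 (by simp)) (z 19 (by simp)) E1
  obtain ⟨r3, r4⟩ := K.four_exp (z 12 (by simp)) (z 18 (by simp)) (h 12 (by simp))
    (h 18 (by simp)) E2
  obtain ⟨r5, r6, q1, q2, q3, q4⟩ := K.six_exp (z 13 (by simp)) (z 17 (by simp)) (h 13 (by simp))
    (h 17 (by simp)) (h' 13 (by simp)) (h' 17 (by simp)) E3
  have h1 := K.sumR F 6
  have h2 := K.sumL F 6
  rw [Icc_exp] at h1 h2
  have e : ((6 : Fin 10) : ℕ) = 6 := rfl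
  rw [e] at h1 h2
  have a4 := K.RL 14 6
  have a5 := K.RL 15 6
  have a6 := K.RL 16 6
  have s1 : K.L 11 6 = 0 ∧ K.L 12 6 = 0 ∧ K.L 13 6 = 0 ∧ K.L 17 6 = 0 ∧ K.L 18 6 = 0 ∧
    K.L 19 6 = 0 := by omega
  obtain ⟨s1, s2, s3, s4, s5, s6⟩ := s1
  clear h1 h2 a4 a5 a6 z h h' E1 E2 E3 r1 r2 r3 r4 r5 r6
  intro g hg hg2
  rw [Finset.mem_Icc] at hg hg2
  have hg3 : g = 11 ∨ g = 12 ∨ g = 13 ∨ g = 17 ∨ g = 18 ∨ g = 19 := by omega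
  rcases hg3 with rfl | rfl | rfl | rfl | rfl | rfl
  · exact ⟨s1, p5, p1⟩
  · exact ⟨s2, p7, p3⟩
  · exact ⟨s3, q3, q1⟩
  · exact ⟨s4, q4, q2⟩
  · exact ⟨s5, p8, p4⟩
  · exact ⟨s6, p6, p2⟩

lemma top_step {t : ℕ} (ht : t < K.M) :
    K.W t 9 ≤ K.W (t + 1) 9 ∧ K.W (t + 1) 9 ≤ K.W t 9 + 1 := by
  rcases K.step t ht with h1 | ⟨l, h1, h2⟩ | ⟨p, q, hpq, h1, h2, h3, h4⟩
  · rw [h1]; omega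
  · by_cases h : (9 : Fin 10) = l
    · subst h; omega
    · rw [h2 9 h]; omega
  · by_cases h : (9 : Fin 10) = q
    · subst h; omega
    · by_cases h' : (9 : Fin 10) = p
      · subst h'
        exfalso
        have := q.2
        have : (9 : ℕ) < q := hpq
        omega
      · rw [h4 9 h' h]; omega

lemma top_mono {s t : ℕ} (hst : s ≤ t) (ht : t ≤ K.M) : K.W s 9 ≤ K.W t 9 := by
  induction t, hst using Nat.le_induction with
  | base => exact le_rfl
  | succ n hn ih => exact (ih (by omega)).trans (K.top_step (by omega)).1

lemma top_hit {w : ℕ} (h1 : 1 ≤ w) (h2 : w ≤ 30) : ∃ S, S ≤ K.M ∧ K.W S 9 = w := by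
  classical
  have hex : ∃ t, t ≤ K.M ∧ w ≤ K.W t 9 := ⟨K.M, le_rfl, by rw [K.fin]; exact h2⟩
  obtain ⟨hle, hlt⟩ := Nat.find_spec hex
  have hmin := fun m => Nat.find_min hex (m := m)
  generalize Nat.find hex = n at hle hlt hmin
  refine ⟨n, hle, ?_⟩
  rcases n with _ | s
  · have := K.start 9
    have e : ((9 : Fin 10) : ℕ) = 9 := rfl
    rw [e] at this
    omega
  · have := hmin s (by omega)
    have := (K.top_step (t := s) (by omega)).2
    have : ¬ w ≤ K.W s 9 := fun h => hmin s (by omega) ⟨by omega, h⟩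
    omega

lemma top_side {w S : ℕ} (hS : S ≤ K.M) (hw : K.W S 9 = w) {i : Fin 10} (hi : i < 9) :
    (K.gam i 9 < w → K.W S i < K.W S 9) ∧ (w ≤ K.gam i 9 → K.W S 9 < K.W S i) := by
  obtain ⟨ht, _, a, b, c⟩ := K.tau_spec hi
  constructor
  · intro h
    apply K.ord_after hi _ hS
    by_contra hc
    have := K.top_mono (s := S) (t := K.tau i 9) (by omega) ht.le
    unfold gam at h
    omega
  · intro h
    apply K.ord_before hi
    by_contra hc
    have := K.top_mono (s := K.tau i 9 + 1) (t := S) (by omega) hS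
    unfold gam at h
    omega

lemma within3 (Q : Finset (Fin 10)) (hQ : Q.card ≤ 3) :
    (pairs.filter fun p => p.1 ∈ Q ∧ p.2 ∈ Q).card ≤ 3 := by
  classical
  have h : (pairs.filter fun p => p.1 ∈ Q ∧ p.2 ∈ Q).card ≤ (Q.powersetCard 2).card := by
    apply Finset.card_le_card_of_injOn (fun p => {p.1, p.2})
    · intro p hp
      simp only [Finset.coe_filter, Set.mem_ofPred_eq, mem_pairs] at hp
      simp only [Finset.mem_coe, Finset.mem_powersetCard]
      refine ⟨?_, Finset.card_pair hp.1.ne⟩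
      intro x hx
      simp at hx
      rcases hx with rfl | rfl
      · exact hp.2.1
      · exact hp.2.2
    · intro p hp q hq h
      simp only [Finset.coe_filter, Set.mem_ofPred_eq, mem_pairs] at hp hq
      change ({p.1, p.2} : Finset (Fin 10)) = {q.1, q.2} at h
      have hp1 := hp.1
      have hq1 := hq.1
      have h1 : p.1 ∈ ({q.1, q.2} : Finset (Fin 10)) := by rw [← h]; simp
      have h2 : p.2 ∈ ({q.1, q.2} : Finset (Fin 10)) := by rw [← h]; simp
      simp at h1 h2
      apply Prod.ext <;> grind
  rw [Finset.card_powersetCard] at h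
  exact h.trans ((Nat.choose_le_choose 2 hQ).trans (by decide))

lemma final (F : ∀ i j, i < j → K.gam i j ∈ Finset.Icc 11 19) (E1 : K.D 11 + K.D 19 = 2)
    (E2 : K.D 12 + K.D 18 = 4) (E3 : K.D 13 + K.D 17 = 6) : K.D 15 ≤ 19 := by
  classical
  have h4 := K.stage4 F E1 E2 E3
  have h1 := K.stage1 F
  -- injectivity
  have hinj : ∀ i i', i < 9 → i' < 9 → K.gam i 9 = K.gam i' 9 → i = i' := by
    intro i i' hi hi' h
    have := h1 (K.gam i 9) (F _ _ hi)
    unfold R at this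
    have := Finset.card_le_one.mp this.le
    exact this i (by simp [hi]) i' (by simp [hi', h])
  have htop : ∀ i : Fin 10, i = 6 ∨ i = 7 ∨ i = 8 → K.gam i 9 ∈ Finset.Icc 14 16 := by
    intro i hi
    by_contra hc
    have hi9 : i < 9 := by rcases hi with rfl | rfl | rfl <;> decide
    have h5 := h4 (K.gam i 9) (F _ _ hi9) hc
    have : K.L (K.gam i 9) i ≠ 0 := by
      unfold L
      rw [Finset.card_ne_zero]
      exact ⟨9, by simp [hi9]⟩
    rcases hi with rfl | rfl | rfl <;> omega
  have hlow : ∀ i : Fin 10, i < 6 → K.gam i 9 ≤ 13 ∨ 17 ≤ K.gam i 9 := by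
    intro i hi
    by_contra hc
    push Not at hc
    have hi9 : i < 9 := hi.trans (by decide)
    have a := htop 6 (by simp)
    have b := htop 7 (by simp)
    have c := htop 8 (by simp)
    rw [Finset.mem_Icc] at a b c
    have n1 : K.gam 6 9 ≠ K.gam 7 9 := fun h => absurd (hinj _ _ (by decide) (by decide) h) (by decide)
    have n2 : K.gam 6 9 ≠ K.gam 8 9 := fun h => absurd (hinj _ _ (by decide) (by decide) h) (by decide)
    have n3 : K.gam 7 9 ≠ K.gam 8 9 := fun h => absurd (hinj _ _ (by decide) (by decide) h) (by decide)
    have m1 : K.gam i 9 ≠ K.gam 6 9 := fun h => by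
      have := hinj _ _ hi9 (by decide) h; subst this; exact absurd hi (by decide)
    have m2 : K.gam i 9 ≠ K.gam 7 9 := fun h => by
      have := hinj _ _ hi9 (by decide) h; subst this; exact absurd hi (by decide)
    have m3 : K.gam i 9 ≠ K.gam 8 9 := fun h => by
      have := hinj _ _ hi9 (by decide) h; subst this; exact absurd hi (by decide)
    omega
  obtain ⟨Ls, hLs⟩ : ∃ Ls : Finset (Fin 10), ∀ i, i ∈ Ls ↔ i < 6 ∧ K.gam i 9 ≤ 13 :=
    ⟨Finset.univ.filter fun i => i < 6 ∧ K.gam i 9 ≤ 13, by simp⟩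
  obtain ⟨Rs, hRs⟩ : ∃ Rs : Finset (Fin 10), ∀ i, i ∈ Rs ↔ i < 6 ∧ 17 ≤ K.gam i 9 :=
    ⟨Finset.univ.filter fun i => i < 6 ∧ 17 ≤ K.gam i 9, by simp⟩
  have t6 : ∀ i : Fin 10, i < 6 → i < 9 := fun i h => h.trans (by decide)
  have cL : Ls.card ≤ 3 := by
    have : Ls.card ≤ (Finset.Icc 11 13).card := by
      apply Finset.card_le_card_of_injOn (fun i => K.gam i 9)
      · intro i hi
        have hi := (hLs i).mp hi
        have := F i 9 (t6 _ hi.1)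
        simp at this ⊢
        omega
      · intro i hi j hj h
        have hi := (hLs i).mp hi
        have hj := (hLs j).mp hj
        exact hinj _ _ (t6 _ hi.1) (t6 _ hj.1) h
    simpa using this
  have cR : Rs.card ≤ 3 := by
    have : Rs.card ≤ (Finset.Icc 17 19).card := by
      apply Finset.card_le_card_of_injOn (fun i => K.gam i 9)
      · intro i hi
        have hi := (hRs i).mp hi
        have := F i 9 (t6 _ hi.1)
        simp at this ⊢
        omega
      · intro i hi j hj h
        have hi := (hRs i).mp hi
        have hj := (hRs j).mp hj
        exact hinj _ _ (t6 _ hi.1) (t6 _ hj.1) h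
    simpa using this
  have cLR : (Rs.erase 0).card + (Ls.erase 0).card ≤ 5 := by
    have hd : Disjoint (Rs.erase 0) (Ls.erase 0) := by
      rw [Finset.disjoint_left]
      intro i hi hj
      have := (hRs i).mp (Finset.mem_of_mem_erase hi)
      have := (hLs i).mp (Finset.mem_of_mem_erase hj)
      omega
    rw [← Finset.card_union_of_disjoint hd]
    have : Rs.erase 0 ∪ Ls.erase 0 ⊆ {1, 2, 3, 4, 5} := by
      intro i hi
      rw [Finset.mem_union, Finset.mem_erase, Finset.mem_erase, hRs, hLs] at hi
      have h0 : i ≠ 0 := by tauto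
      have h6 : i < 6 := by tauto
      clear hi
      revert i
      decide
    exact (Finset.card_le_card this).trans (by decide)
  obtain ⟨S2, hS2, hw2⟩ := K.top_hit (w := 17) (by norm_num) (by norm_num)
  obtain ⟨S1, hS1, hw1⟩ := K.top_hit (w := 14) (by norm_num) (by norm_num)
  -- classification of indices
  have cls : ∀ i : Fin 10, i ∈ Ls ∨ i ∈ Rs ∨ (i = 6 ∨ i = 7 ∨ i = 8) ∨ i = 9 := by
    intro i
    rw [hLs, hRs]
    by_cases h : i < 6
    · have := hlow i h; tauto
    · right; right
      revert i
      decide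
  have side2R : ∀ i ∈ Rs, K.W S2 9 < K.W S2 i := fun i hi =>
    (K.top_side hS2 hw2 (t6 _ ((hRs i).mp hi).1)).2 ((hRs i).mp hi).2
  have side2L : ∀ i, i ∉ Rs → K.W S2 i ≤ K.W S2 9 := by
    intro i hi
    rcases cls i with h | h | h | h
    · have h := (hLs i).mp h
      exact ((K.top_side hS2 hw2 (t6 _ h.1)).1 (by omega)).le
    · exact absurd h hi
    · have h9 : i < 9 := by rcases h with rfl | rfl | rfl <;> decide
      have := htop i h
      rw [Finset.mem_Icc] at this
      exact ((K.top_side hS2 hw2 h9).1 (by omega)).le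
    · rw [h]
  have side1L : ∀ i ∈ Ls, K.W S1 i < K.W S1 9 := fun i hi =>
    (K.top_side hS1 hw1 (t6 _ ((hLs i).mp hi).1)).1 (by have := ((hLs i).mp hi).2; omega)
  have side1R : ∀ i, i ∉ Ls → K.W S1 9 ≤ K.W S1 i := by
    intro i hi
    rcases cls i with h | h | h | h
    · exact absurd h hi
    · have h := (hRs i).mp h
      exact ((K.top_side hS1 hw1 (t6 _ h.1)).2 (by omega)).le
    · have h9 : i < 9 := by rcases h with rfl | rfl | rfl <;> decide
      have := htop i h
      rw [Finset.mem_Icc] at this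
      exact ((K.top_side hS1 hw1 h9).2 (by omega)).le
    · rw [h]
  have hLR : ∀ i, i ∈ Ls → i ∉ Rs := by
    intro i hi hj
    have := (hLs i).mp hi
    have := (hRs i).mp hj
    omega
  -- the six parts
  have b1 : (pairs.filter fun p => p.2 = 9 ∧ K.gam p.1 p.2 = 15).card ≤ 1 := by
    rw [Finset.card_le_one]
    intro p hp q hq
    simp only [Finset.mem_filter, mem_pairs] at hp hq
    obtain ⟨p1, p2⟩ := p
    obtain ⟨q1, q2⟩ := q
    obtain ⟨a, b, c⟩ := hp
    obtain ⟨a', b', c'⟩ := hq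
    simp only at a b c a' b' c'
    subst b; subst b'
    rw [hinj p1 q1 a a' (c.trans c'.symm)]
  have b3 : (pairs.filter fun p => p.2 ∈ ({6, 7, 8, 9} : Finset (Fin 10)) ∧
      p.1 ∉ ({6, 7, 8, 9} : Finset (Fin 10)) ∧ K.gam p.1 p.2 = 15 ∧ 0 ≤ K.tau p.1 p.2 ∧
      K.tau p.1 p.2 < K.M).card ≤ 4 := by
    refine (K.flow_pairs {6, 7, 8, 9} 15 (Nat.zero_le K.M) le_rfl).trans ?_
    rw [Finset.filter_false_of_mem]
    · decide
    · rintro ⟨i, j⟩ hp ⟨a, b, hx⟩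
      clear hx
      rw [mem_pairs] at hp
      simp only at hp a b
      revert i j
      decide
  have b4 := within3 Ls cL
  have b5 := within3 Rs cR
  have b6 : (pairs.filter fun p => p.2 ∈ Rs.erase 0 ∧ p.1 ∉ Rs.erase 0 ∧ K.gam p.1 p.2 = 15 ∧
      0 ≤ K.tau p.1 p.2 ∧ K.tau p.1 p.2 < S2).card ≤ (Rs.erase 0).card := by
    refine (K.flow_pairs (Rs.erase 0) 15 (Nat.zero_le S2) hS2).trans ?_
    rw [Finset.filter_false_of_mem]
    · simp
    · rintro ⟨i, j⟩ hp ⟨a, b, _, _, e⟩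
      rw [mem_pairs] at hp
      simp only at hp a b e
      have hj0 : j ≠ 0 := (lt_of_le_of_lt (Fin.zero_le i) hp).ne'
      have hjR : j ∉ Rs := fun h => b (Finset.mem_erase.mpr ⟨hj0, h⟩)
      have x1 := side2R i (Finset.mem_of_mem_erase a)
      have x2 := side2L j hjR
      have x3 := K.ord_after hp e hS2
      omega
  have b7 : (pairs.filter fun p => p.2 ∈ Ls.erase 0 ∧ p.1 ∉ Ls.erase 0 ∧ K.gam p.1 p.2 = 15 ∧
      S1 ≤ K.tau p.1 p.2 ∧ K.tau p.1 p.2 < K.M).card ≤ (Ls.erase 0).card := by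
    refine (K.flow_pairs (Ls.erase 0) 15 hS1 le_rfl).trans ?_
    rw [Finset.filter_false_of_mem]
    · simp
    · rintro ⟨i, j⟩ hp ⟨a, b, _, d, _⟩
      rw [mem_pairs] at hp
      simp only at hp a b d
      have hj0 : j ≠ 0 := (lt_of_le_of_lt (Fin.zero_le i) hp).ne'
      have hjR : j ∉ Ls := fun h => b (Finset.mem_erase.mpr ⟨hj0, h⟩)
      have x1 := side1L i (Finset.mem_of_mem_erase a)
      have x2 := side1R j hjR
      have x3 := K.ord_before hp d
      omega
  have b2 : ({(6, 7), (6, 8), (7, 8)} : Finset (Fin 10 × Fin 10)).card ≤ 3 := by decide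
  generalize hA1 : (pairs.filter fun p => p.2 = 9 ∧ K.gam p.1 p.2 = 15) = A1 at b1
  generalize hA2 : ({(6, 7), (6, 8), (7, 8)} : Finset (Fin 10 × Fin 10)) = A2 at b2
  generalize hA3 : (pairs.filter fun p => p.2 ∈ ({6, 7, 8, 9} : Finset (Fin 10)) ∧
      p.1 ∉ ({6, 7, 8, 9} : Finset (Fin 10)) ∧ K.gam p.1 p.2 = 15 ∧ 0 ≤ K.tau p.1 p.2 ∧
      K.tau p.1 p.2 < K.M) = A3 at b3
  generalize hA4 : (pairs.filter fun p => p.1 ∈ Ls ∧ p.2 ∈ Ls) = A4 at b4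
  generalize hA5 : (pairs.filter fun p => p.1 ∈ Rs ∧ p.2 ∈ Rs) = A5 at b5
  generalize hA6 : (pairs.filter fun p => p.2 ∈ Rs.erase 0 ∧ p.1 ∉ Rs.erase 0 ∧
      K.gam p.1 p.2 = 15 ∧ 0 ≤ K.tau p.1 p.2 ∧ K.tau p.1 p.2 < S2) = A6 at b6
  generalize hA7 : (pairs.filter fun p => p.2 ∈ Ls.erase 0 ∧ p.1 ∉ Ls.erase 0 ∧
      K.gam p.1 p.2 = 15 ∧ S1 ≤ K.tau p.1 p.2 ∧ K.tau p.1 p.2 < K.M) = A7 at b7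
  have hsub : (pairs.filter fun p => K.gam p.1 p.2 = 15) ⊆
      A1 ∪ (A2 ∪ (A3 ∪ (A4 ∪ (A5 ∪ (A6 ∪ A7))))) := by
    rintro ⟨i, j⟩ hp
    rw [Finset.mem_filter, mem_pairs] at hp
    obtain ⟨hij, hg⟩ := hp
    simp only at hij hg
    obtain ⟨ht, _⟩ := K.tau_spec hij
    have hj0 : j ≠ 0 := (lt_of_le_of_lt (Fin.zero_le i) hij).ne'
    simp only [Finset.mem_union]
    have clT : ∀ k : Fin 10, k ∈ Ls ∨ k ∈ Rs ∨ k ∈ ({6, 7, 8, 9} : Finset (Fin 10)) := by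
      intro k
      have := cls k
      simp only [Finset.mem_insert, Finset.mem_singleton]
      tauto
    have lowT : ∀ k : Fin 10, k < 6 → k ∉ ({6, 7, 8, 9} : Finset (Fin 10)) := by decide
    by_cases hjT : j ∈ ({6, 7, 8, 9} : Finset (Fin 10))
    · by_cases hiT : i ∈ ({6, 7, 8, 9} : Finset (Fin 10))
      · by_cases hj9 : j = 9
        · left
          rw [← hA1]
          simp [mem_pairs, hij, hg, hj9]
          rw [← hj9]; exact ⟨hij, hg⟩
        · right; left
          rw [← hA2]
          have : ∀ i j : Fin 10, i < j → j ∈ ({6, 7, 8, 9} : Finset (Fin 10)) →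
              i ∈ ({6, 7, 8, 9} : Finset (Fin 10)) → j ≠ 9 →
              (i, j) ∈ ({(6, 7), (6, 8), (7, 8)} : Finset (Fin 10 × Fin 10)) := by decide
          exact this i j hij hjT hiT hj9
      · right; right; left
        rw [← hA3]
        rw [Finset.mem_filter, mem_pairs]
        exact ⟨hij, hjT, hiT, hg, Nat.zero_le _, ht⟩
    · right; right; right
      have hiT : i ∉ ({6, 7, 8, 9} : Finset (Fin 10)) := by
        have : ∀ i j : Fin 10, i < j → j ∉ ({6, 7, 8, 9} : Finset (Fin 10)) →
          i ∉ ({6, 7, 8, 9} : Finset (Fin 10)) := by decide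
        exact this i j hij hjT
      rcases clT i with hi | hi | hi
      · rcases clT j with hj | hj | hj
        · left
          rw [← hA4, Finset.mem_filter, mem_pairs]
          exact ⟨hij, hi, hj⟩
        · right; right; left
          rw [← hA6, Finset.mem_filter, mem_pairs]
          refine ⟨hij, Finset.mem_erase.mpr ⟨hj0, hj⟩,
            fun h => hLR i hi (Finset.mem_of_mem_erase h), hg, Nat.zero_le _, ?_⟩
          by_contra hc
          have x1 := side2R j hj
          have x2 := side2L i (hLR i hi)
          have x3 := K.ord_before hij (not_lt.mp hc)
          omega
        · exact absurd hj hjT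
      · rcases clT j with hj | hj | hj
        · right; right; right
          rw [← hA7, Finset.mem_filter, mem_pairs]
          refine ⟨hij, Finset.mem_erase.mpr ⟨hj0, hj⟩,
            fun h => hLR i (Finset.mem_of_mem_erase h) hi, hg, ?_, ht⟩
          by_contra hc
          have x1 := side1L j hj
          have x2 := side1R i (fun h => hLR i h hi)
          have x3 := K.ord_after hij (not_le.mp hc) hS1
          omega
        · right; left
          rw [← hA5, Finset.mem_filter, mem_pairs]
          exact ⟨hij, hi, hj⟩
        · exact absurd hj hjT
      · exact absurd hi hiT
  have hc := Finset.card_le_card hsub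
  have u1 := Finset.card_union_le A1 (A2 ∪ (A3 ∪ (A4 ∪ (A5 ∪ (A6 ∪ A7)))))
  have u2 := Finset.card_union_le A2 (A3 ∪ (A4 ∪ (A5 ∪ (A6 ∪ A7))))
  have u3 := Finset.card_union_le A3 (A4 ∪ (A5 ∪ (A6 ∪ A7)))
  have u4 := Finset.card_union_le A4 (A5 ∪ (A6 ∪ A7))
  have u5 := Finset.card_union_le A5 (A6 ∪ A7)
  have u6 := Finset.card_union_le A6 A7
  unfold D
  omega

end Trk
namespace Trk

variable (K : Trk)

lemma step_le {t : ℕ} (ht : t < K.M) (i : Fin 10) :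
    K.W (t + 1) i ≤ K.W t i + 1 ∧ K.W t i ≤ K.W (t + 1) i + 1 := by
  rcases K.step t ht with h1 | ⟨l, h1, h2⟩ | ⟨p, q, hpq, h1, h2, h3, h4⟩
  · rw [h1]; omega
  · by_cases h : i = l
    · subst h; omega
    · rw [h2 i h]; omega
  · by_cases h : i = q
    · subst h; omega
    · by_cases h' : i = p
      · subst h'; omega
      · rw [h4 i h' h]; omega

noncomputable def uc (g : ℕ) (i : Fin 10) (t : ℕ) : ℕ :=
  ((Finset.range t).filter fun t => K.W t i = g ∧ K.W (t + 1) i = g + 1).card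

noncomputable def dc (g : ℕ) (i : Fin 10) (t : ℕ) : ℕ :=
  ((Finset.range t).filter fun t => K.W t i = g + 1 ∧ K.W (t + 1) i = g).card

lemma tele (g : ℕ) (i : Fin 10) (t : ℕ) (ht : t ≤ K.M) :
    K.uc g i t + (if K.W t i ≤ g then 1 else 0) =
      K.dc g i t + (if K.W 0 i ≤ g then 1 else 0) := by
  induction t with
  | zero => simp [uc, dc]
  | succ t ih =>
    have h := ih (by omega)
    have h1 := K.step_le (t := t) (by omega) i
    unfold uc dc at h ⊢
    rw [Finset.card_filter, Finset.card_filter] at h ⊢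
    rw [Finset.sum_range_succ, Finset.sum_range_succ]
    generalize (if K.W 0 i ≤ g then 1 else 0) = c0 at *
    generalize K.W t i = w at *
    generalize K.W (t + 1) i = w' at *
    split_ifs at h ⊢ <;> omega

def m (g : ℕ) : ℕ := (Finset.univ.filter fun i : Fin 10 => 10 - (i : ℕ) ≤ g ∧ g < 21 + (i : ℕ)).card

lemma D_le_dc (g : ℕ) : K.D g ≤ ∑ i, K.dc g i K.M := by
  classical
  have : (Finset.univ.sigma fun i : Fin 10 => (Finset.range K.M).filter
      fun t => K.W t i = g + 1 ∧ K.W (t + 1) i = g).card = ∑ i, K.dc g i K.M := by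
    rw [Finset.card_sigma]; rfl
  rw [← this]
  apply Finset.card_le_card_of_injOn (fun p => ⟨p.1, K.tau p.1 p.2⟩)
  · intro p hp
    simp only [Finset.coe_filter, Set.mem_ofPred_eq, mem_pairs] at hp
    obtain ⟨h1, h2⟩ := hp
    obtain ⟨ht, _, a, b, c⟩ := K.tau_spec h1
    unfold gam at h2
    simp [ht]
    omega
  · intro p hp q hq h
    simp only [Finset.coe_filter, Set.mem_ofPred_eq, mem_pairs] at hp hq
    simp only [Sigma.mk.injEq, heq_eq_eq] at h
    have a := K.tau_spec hp.1
    have b := K.tau_spec hq.1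
    rw [← h.2] at b
    have := K.sw_unique a.1 a.2 b.2
    exact Prod.ext this.1 this.2

lemma cnt (g : ℕ) : 2 * K.D g + m g ≤ ((Finset.range K.M ×ˢ (Finset.univ : Finset (Fin 10))).filter
    fun q => K.W q.1 q.2 ≠ K.W (q.1 + 1) q.2 ∧ min (K.W q.1 q.2) (K.W (q.1 + 1) q.2) = g).card := by
  classical
  have h1 : ∀ i, K.uc g i K.M = K.dc g i K.M +
      (if 10 - (i : ℕ) ≤ g ∧ g < 21 + (i : ℕ) then 1 else 0) := by
    intro i
    have := K.tele g i K.M le_rfl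
    rw [K.fin, K.start] at this
    have := i.2
    split_ifs at * <;> omega
  have h2 : ∑ i, K.uc g i K.M = ∑ i, K.dc g i K.M + m g := by
    rw [Finset.sum_congr rfl (fun i _ => h1 i), Finset.sum_add_distrib, m, Finset.card_filter]
  have h3 := K.D_le_dc g
  have h4 : ∑ i, (K.uc g i K.M + K.dc g i K.M) ≤
    ((Finset.range K.M ×ˢ (Finset.univ : Finset (Fin 10))).filter
    fun q => K.W q.1 q.2 ≠ K.W (q.1 + 1) q.2 ∧ min (K.W q.1 q.2) (K.W (q.1 + 1) q.2) = g).card := by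
    rw [Finset.card_filter, Finset.sum_product_right]
    apply Finset.sum_le_sum
    intro i _
    unfold uc dc
    rw [Finset.card_filter, Finset.card_filter, ← Finset.sum_add_distrib]
    apply Finset.sum_le_sum
    intro t _
    simp only
    split_ifs <;> omega
  rw [Finset.sum_add_distrib] at h4
  omega

lemma cntG (G : Finset ℕ) : ∑ g ∈ G, (2 * K.D g + m g) ≤
    ((Finset.range K.M ×ˢ (Finset.univ : Finset (Fin 10))).filter
    fun q => K.W q.1 q.2 ≠ K.W (q.1 + 1) q.2 ∧
      min (K.W q.1 q.2) (K.W (q.1 + 1) q.2) ∈ G).card := by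
  classical
  rw [Finset.card_eq_sum_card_fiberwise (f := fun q => min (K.W q.1 q.2) (K.W (q.1 + 1) q.2))
    (t := G) (by intro q hq; simp at hq ⊢; exact hq.2.2)]
  apply Finset.sum_le_sum
  intro g hg
  refine (K.cnt g).trans (Finset.card_le_card ?_)
  intro q hq
  simp only [Finset.mem_filter] at hq ⊢
  refine ⟨⟨hq.1, hq.2.1, ?_⟩, hq.2.2⟩
  rw [hq.2.2]; exact hg

end Trk

def GK (k : ℕ) : Finset ℕ := Finset.Icc 1 k ∪ Finset.Icc (30 - k) 29

lemma mem_GK {k g : ℕ} : g ∈ GK k ↔ (1 ≤ g ∧ g ≤ k) ∨ (30 - k ≤ g ∧ g ≤ 29) := by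
  simp [GK]

structure Stp (hp : HalfPeriod 30) (t : ℕ) (x y : Fin 30) : Prop where
  h1 : hp.pos t y = hp.pos t x + 1
  h2 : hp.pos (t + 1) x = hp.pos t x + 1
  h3 : hp.pos (t + 1) y = hp.pos t x
  h4 : ∀ z, z ≠ x → z ≠ y → hp.pos (t + 1) z = hp.pos t z

section
variable (hp : HalfPeriod 30)

lemma exXY : ∃ X Y : ℕ → Fin 30, ∀ t, t < 435 → Stp hp t (X t) (Y t) := by
  classical
  have h : ∀ t, ∃ p : Fin 30 × Fin 30, t < 435 → Stp hp t p.1 p.2 := by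
    intro t
    by_cases ht : t < 435
    · obtain ⟨x, y, a, b, c, d⟩ := hp.step t ht
      exact ⟨(x, y), fun _ => ⟨a, b, c, d⟩⟩
    · exact ⟨(0, 0), fun h => absurd h ht⟩
  choose f hf using h
  exact ⟨fun t => (f t).1, fun t => (f t).2, hf⟩

end

def IsXY (hp : HalfPeriod 30) (X Y : ℕ → Fin 30) : Prop := ∀ t, t < 435 → Stp hp t (X t) (Y t)

section
variable {hp : HalfPeriod 30} {X Y : ℕ → Fin 30}

lemma posinj {t : ℕ} (ht : t ≤ 435) {x y : Fin 30} (h : hp.pos t x = hp.pos t y) : x = y :=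
  hp.pos_inj t ht h

lemma IsXY.ne (hXY : IsXY hp X Y) {t : ℕ} (ht : t < 435) : X t ≠ Y t := by
  intro h
  have := (hXY t ht).h1
  rw [h] at this
  omega

lemma IsXY.one (hXY : IsXY hp X Y) {t : ℕ} (ht : t < 435) {x y : Fin 30}
    (h : hp.pos t x < hp.pos t y) (h' : hp.pos (t + 1) y < hp.pos (t + 1) x) :
    X t = x ∧ Y t = y := by
  obtain ⟨a, b, c, d⟩ := hXY t ht
  generalize X t = p at *
  generalize Y t = q at *
  have hne : x ≠ y := by rintro rfl; omega
  have i1 : x ≠ p → hp.pos t x ≠ hp.pos t p := fun e f => e (posinj ht.le f)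
  have i4 : y ≠ q → hp.pos t y ≠ hp.pos t q := fun e f => e (posinj ht.le f)
  have d1 := d x
  have d2 := d y
  by_cases e1 : x = p
  · subst e1
    by_cases e2 : y = q
    · exact ⟨rfl, e2.symm⟩
    · exfalso
      have := d2 hne.symm e2
      have := i4 e2
      omega
  · exfalso
    by_cases e2 : x = q
    · subst e2
      by_cases e3 : y = p
      · subst e3; omega
      · have := d2 e3 hne.symm
        omega
    · have := d1 e1 e2
      by_cases e3 : y = p
      · subst e3; omega
      · by_cases e4 : y = q
        · subst e4
          have := i1 e1
          omega
        · have := d2 e3 e4; omega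

lemma IsXY.cross (hXY : IsXY hp X Y) {t t' : ℕ} (htt : t ≤ t') (ht' : t' ≤ 435) {x y : Fin 30}
    (h : hp.pos t x < hp.pos t y) (h' : hp.pos t' y < hp.pos t' x) :
    ∃ s, t ≤ s ∧ s < t' ∧ X s = x ∧ Y s = y := by
  induction t', htt using Nat.le_induction with
  | base => omega
  | succ n hn ih =>
    have hne : x ≠ y := by rintro rfl; omega
    have : hp.pos n x ≠ hp.pos n y := fun e => hne (posinj (by omega) e)
    rcases lt_or_gt_of_ne this with h1 | h1
    · exact ⟨n, hn, by omega, hXY.one (by omega) h1 h'⟩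
    · obtain ⟨s, a, b, c⟩ := ih (by omega) h1
      exact ⟨s, a, by omega, c⟩

lemma pos_end (x : Fin 30) : hp.pos 435 x + hp.pos 0 x = 31 := by
  have h1 := hp.reverse x
  have h2 := hp.pos_mem 0 (by norm_num) x
  have h3 : hp.pos 435 x = 30 + 1 - hp.pos 0 x := h1
  omega

lemma IsXY.inj (hXY : IsXY hp X Y) {s s' : ℕ} (hs : s < 435) (hs' : s' < 435)
    (h : s(X s, Y s) = s(X s', Y s')) : s = s' := by
  classical
  let f : Fin 435 → {z : Sym2 (Fin 30) // ¬ z.IsDiag} := fun t =>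
    ⟨s(X t, Y t), by rw [Sym2.mk_isDiag_iff]; exact hXY.ne t.2⟩
  have hsurj : Function.Surjective f := by
    rintro ⟨z, hz⟩
    induction z using Sym2.ind with
    | _ x y =>
      rw [Sym2.mk_isDiag_iff] at hz
      have e1 := pos_end (hp := hp) x
      have e2 := pos_end (hp := hp) y
      have : hp.pos 0 x ≠ hp.pos 0 y := fun e => hz (posinj (by omega) e)
      rcases lt_or_gt_of_ne this with h1 | h1
      · obtain ⟨s, _, a, b, c⟩ := hXY.cross (Nat.zero_le 435) le_rfl h1 (by omega)
        refine ⟨⟨s, a⟩, Subtype.ext ?_⟩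
        change s(X s, Y s) = _
        rw [b, c]
      · obtain ⟨s, _, a, b, c⟩ := hXY.cross (Nat.zero_le 435) le_rfl h1 (by omega)
        refine ⟨⟨s, a⟩, Subtype.ext ?_⟩
        change s(X s, Y s) = _
        rw [b, c, Sym2.eq_swap]
  have hcard : Fintype.card (Fin 435) = Fintype.card {z : Sym2 (Fin 30) // ¬ z.IsDiag} := by
    rw [Sym2.card_subtype_not_diag]; simp [Nat.choose]
  have hb := (Fintype.bijective_iff_surjective_and_card f).mpr ⟨hsurj, hcard⟩
  have := hb.1 (a₁ := ⟨s, hs⟩) (a₂ := ⟨s', hs'⟩) (Subtype.ext h)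
  exact Fin.mk.inj_iff.mp this

lemma IsXY.before (hXY : IsXY hp X Y) {s t : ℕ} (hs : s < 435) (ht : t ≤ s) :
    hp.pos t (X s) < hp.pos t (Y s) := by
  have : hp.pos t (X s) ≠ hp.pos t (Y s) := fun e => hXY.ne hs (posinj (by omega) e)
  by_contra hc
  have h1 := (hXY s hs).h1
  obtain ⟨s', a, b, c, d⟩ := hXY.cross ht hs.le (x := Y s) (y := X s) (by omega) (by omega)
  have := hXY.inj (s := s') (s' := s) (by omega) hs (by rw [c, d, Sym2.eq_swap])
  omega

lemma IsXY.after (hXY : IsXY hp X Y) {s t : ℕ} (ht : s < t) (ht' : t ≤ 435) :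
    hp.pos t (Y s) < hp.pos t (X s) := by
  have hs : s < 435 := by omega
  have : hp.pos t (X s) ≠ hp.pos t (Y s) := fun e => hXY.ne hs (posinj (by omega) e)
  by_contra hc
  have h1 := (hXY s hs).h1
  have h2 := (hXY s hs).h2
  have h3 := (hXY s hs).h3
  obtain ⟨s', a, b, c, d⟩ := hXY.cross (t := s + 1) ht ht' (x := Y s) (y := X s)
    (by omega) (by omega)
  have := hXY.inj (s := s') (s' := s) (by omega) hs (by rw [c, d, Sym2.eq_swap])
  omega

lemma IsXY.moved_iff (hXY : IsXY hp X Y) {s : ℕ} (hs : s < 435) (z : Fin 30) :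
    hp.Moved s z ↔ z = X s ∨ z = Y s := by
  obtain ⟨a, b, c, d⟩ := hXY s hs
  unfold HalfPeriod.Moved
  constructor
  · intro h
    by_contra hc
    push Not at hc
    exact h (d z hc.1 hc.2)
  · rintro (rfl | rfl) <;> omega

lemma IsXY.gate_iff (hXY : IsXY hp X Y) {s : ℕ} (hs : s < 435) (g : ℕ) :
    hp.GateAt s g ↔ hp.pos s (X s) = g := by
  obtain ⟨a, b, c, d⟩ := hXY s hs
  constructor
  · rintro ⟨x, y, e1, e2, e3, e4⟩
    obtain ⟨rfl, rfl⟩ := hXY.one hs (x := x) (y := y) (by omega) (by omega)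
    exact e1
  · intro h
    exact ⟨X s, Y s, by omega, by omega, by omega, by omega⟩

end

noncomputable def sg (T t : ℕ) : ℕ := if t < 435 - T then T + t else t - (435 - T)

noncomputable def WW (hp : HalfPeriod 30) (T : ℕ) (e : Fin 10 → Fin 30) (t : ℕ) (i : Fin 10) : ℕ :=
  if t < 435 - T then hp.pos (T + t) (e i) else 31 - hp.pos (t - (435 - T)) (e i)

lemma WW_rel (hp : HalfPeriod 30) {T : ℕ} (hT : T ≤ 435) (e : Fin 10 → Fin 30) {t : ℕ}
    (ht : t < 435) :
    sg T t < 435 ∧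
    ((T ≤ sg T t ∧ ∀ i, WW hp T e t i = hp.pos (sg T t) (e i) ∧
      WW hp T e (t + 1) i = hp.pos (sg T t + 1) (e i)) ∨
    (sg T t < T ∧ ∀ i, WW hp T e t i = 31 - hp.pos (sg T t) (e i) ∧
      WW hp T e (t + 1) i = 31 - hp.pos (sg T t + 1) (e i))) := by
  unfold sg WW
  by_cases h : t < 435 - T
  · simp only [h, if_true]
    refine ⟨by omega, Or.inl ⟨by omega, fun i => ⟨trivial, ?_⟩⟩⟩
    by_cases h' : t + 1 < 435 - T
    · simp only [h', if_true]; rfl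
    · simp only [h', if_false]
      have e1 : t + 1 - (435 - T) = 0 := by omega
      have e2 : T + t + 1 = 435 := by omega
      rw [e1, e2]
      have := pos_end (hp := hp) (e i)
      omega
  · have h' : ¬ t + 1 < 435 - T := by omega
    simp only [h, h', if_false]
    refine ⟨by omega, Or.inr ⟨by omega, fun i => ⟨trivial, ?_⟩⟩⟩
    have : t + 1 - (435 - T) = t - (435 - T) + 1 := by omega
    rw [this]

lemma sg_inj {T t t' : ℕ} (hT : T ≤ 435) (ht : t < 435) (ht' : t' < 435) (h : sg T t = sg T t') :
    t = t' := by
  unfold sg at h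
  split_ifs at h <;> omega

lemma sg_surj {T s : ℕ} (hT : T ≤ 435) (hs : s < 435) : ∃ t, t < 435 ∧ sg T t = s := by
  unfold sg
  by_cases h : T ≤ s
  · refine ⟨s - T, by omega, ?_⟩
    rw [if_pos (by omega)]; omega
  · refine ⟨s + (435 - T), by omega, ?_⟩
    rw [if_neg (by omega)]; omega

lemma low_mem {hp : HalfPeriod 30} {T : ℕ} (hT : T ≤ 435) {e : Fin 10 → Fin 30}
    (he : ∀ i, hp.pos T (e i) = 10 - (i : ℕ)) {x : Fin 30} (hx : hp.pos T x ≤ 10) :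
    ∃ i, x = e i := by
  have h1 := (hp.pos_mem T hT x).1
  refine ⟨⟨10 - hp.pos T x, by omega⟩, ?_⟩
  apply posinj (hp := hp) hT
  rw [he]
  simp only
  omega

noncomputable def mkTrk {hp : HalfPeriod 30} {X Y : ℕ → Fin 30} (hXY : IsXY hp X Y) {T : ℕ}
    (hT : T ≤ 435) {e : Fin 10 → Fin 30} (he : ∀ i, hp.pos T (e i) = 10 - (i : ℕ)) : Trk where
  M := 435
  W := WW hp T e
  rng := by
    intro t ht i
    unfold WW
    split_ifs with h
    · exact hp.pos_mem (T + t) (by norm_num; omega) (e i)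
    · have := hp.pos_mem (t - (435 - T)) (by norm_num; omega) (e i)
      omega
  inj := by
    have einj : ∀ i j, e i = e j → i = j := by
      intro i j h
      have h1 := he i
      have h2 := he j
      rw [h] at h1
      have := i.2
      have := j.2
      exact Fin.ext (by omega)
    intro t ht i j h
    apply einj
    unfold WW at h
    split_ifs at h with h'
    · exact posinj (hp := hp) (t := T + t) (by omega) h
    · have h1 := hp.pos_mem (t - (435 - T)) (by norm_num; omega) (e i)
      have h2 := hp.pos_mem (t - (435 - T)) (by norm_num; omega) (e j)
      exact posinj (hp := hp) (t := t - (435 - T)) (by omega) (by omega)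
  step := by
    intro t ht
    have einj : ∀ i j, i ≠ j → e i ≠ e j := by
      intro i j hne h
      have h1 := he i
      have h2 := he j
      rw [h] at h1
      have := i.2
      have := j.2
      exact hne (Fin.ext (by omega))
    obtain ⟨hs, hrel⟩ := WW_rel hp hT e ht
    generalize sg T t = s at hs hrel
    obtain ⟨a, b, c, d⟩ := hXY s hs
    rcases hrel with ⟨hTs, hW⟩ | ⟨hTs, hW⟩
    · have hbef := hXY.before hs hTs
      by_cases hx : ∃ j, X s = e j
      · obtain ⟨j, hj⟩ := hx
        by_cases hy : ∃ i, Y s = e i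
        · obtain ⟨i, hi⟩ := hy
          right; right
          rw [hi] at a c d hbef
          rw [hj] at a b c d hbef
          refine ⟨i, j, ?_, ?_, ?_, ?_, ?_⟩
          · rw [he, he] at hbef
            rw [Fin.lt_def]
            omega
          · rw [(hW i).1, (hW j).1]; omega
          · rw [(hW i).2, (hW j).1]; omega
          · rw [(hW j).2, (hW j).1]; omega
          · intro k hk hk'
            rw [(hW k).1, (hW k).2]
            exact d _ (einj _ _ hk') (einj _ _ hk)
        · right; left
          refine ⟨j, ?_, ?_⟩
          · rw [(hW j).1, (hW j).2, ← hj]; omega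
          · intro k hk
            rw [(hW k).1, (hW k).2]
            exact d _ (by rw [hj]; exact einj _ _ hk) (fun h => hy ⟨k, h.symm⟩)
      · by_cases hy : ∃ i, Y s = e i
        · exfalso
          obtain ⟨i, hi⟩ := hy
          rw [hi, he] at hbef
          obtain ⟨j, hj⟩ := low_mem hT he (x := X s) (by omega)
          exact hx ⟨j, hj⟩
        · left
          intro k
          rw [(hW k).1, (hW k).2]
          exact d _ (fun h => hx ⟨k, h.symm⟩) (fun h => hy ⟨k, h.symm⟩)
    · have hbef := hXY.after hTs hT
      have m3 := hp.pos_mem s hs.le (X s)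
      have m4 := hp.pos_mem s hs.le (Y s)
      by_cases hy : ∃ j, Y s = e j
      · obtain ⟨j, hj⟩ := hy
        by_cases hx : ∃ i, X s = e i
        · obtain ⟨i, hi⟩ := hx
          right; right
          rw [hi] at a b c d hbef m3
          rw [hj] at a c d hbef m4
          refine ⟨i, j, ?_, ?_, ?_, ?_, ?_⟩
          · rw [he, he] at hbef
            rw [Fin.lt_def]
            omega
          · rw [(hW i).1, (hW j).1]; omega
          · rw [(hW i).2, (hW j).1]; omega
          · rw [(hW j).2, (hW j).1]; omega
          · intro k hk hk'
            rw [(hW k).1, (hW k).2, d _ (einj _ _ hk) (einj _ _ hk')]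
        · right; left
          refine ⟨j, ?_, ?_⟩
          · rw [(hW j).1, (hW j).2, ← hj]; omega
          · intro k hk
            rw [(hW k).1, (hW k).2, d _ (fun h => hx ⟨k, h.symm⟩) (by rw [hj]; exact einj _ _ hk)]
      · by_cases hx : ∃ i, X s = e i
        · exfalso
          obtain ⟨i, hi⟩ := hx
          rw [hi, he] at hbef
          obtain ⟨j, hj⟩ := low_mem hT he (x := Y s) (by omega)
          exact hy ⟨j, hj⟩
        · left
          intro k
          rw [(hW k).1, (hW k).2, d _ (fun h => hx ⟨k, h.symm⟩) (fun h => hy ⟨k, h.symm⟩)]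
  start := by
    intro i
    unfold WW
    split_ifs with h
    · exact he i
    · have : T = 435 := by omega
      subst this
      have := pos_end (hp := hp) (e i)
      have := he i
      simp only [Nat.sub_self, Nat.sub_zero]
      omega
  fin := by
    intro i
    unfold WW
    have := he i
    have := i.2
    rw [if_neg (by omega)]
    have e1 : 435 - (435 - T) = T := by omega
    rw [e1]
    omega

section
variable {hp : HalfPeriod 30} {X Y : ℕ → Fin 30}

open Classical in
noncomputable def PP (hp : HalfPeriod 30) (k : ℕ) : Finset (ℕ × Fin 30) :=
  (Finset.range 435 ×ˢ (Finset.univ : Finset (Fin 30))).filter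
    fun q => hp.LeCritical q.1 k ∧ hp.Moved q.1 q.2

set_option maxRecDepth 10000 in
set_option linter.constructorNameAsVariable false in
open Classical in
lemma trk_count (hXY : IsXY hp X Y) {T : ℕ} (hT : T ≤ 435) {e : Fin 10 → Fin 30}
    (he : ∀ i, hp.pos T (e i) = 10 - (i : ℕ)) {k : ℕ} (hk : k ≤ 14) :
    ∑ g ∈ GK k, (2 * (mkTrk hXY hT he).D g + Trk.m g) ≤
      ((PP hp k).filter fun q => ∃ i, q.2 = e i).card := by
  generalize hK : mkTrk hXY hT he = K
  have hM : K.M = 435 := by rw [← hK]; rfl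
  have hKW : K.W = WW hp T e := by rw [← hK]; rfl
  refine (K.cntG (GK k)).trans ?_
  rw [hM, hKW]
  apply Finset.card_le_card_of_injOn (fun q => (sg T q.1, e q.2))
  · intro q
    rw [Finset.mem_coe]
    intro hq
    rw [Finset.mem_filter, Finset.mem_product, Finset.mem_range] at hq
    rcases q with ⟨t, i⟩
    have ht : t < 435 := hq.1.1
    have hne := hq.2.1
    have hmin := hq.2.2
    simp only at hne hmin
    obtain ⟨hs, hrel⟩ := WW_rel hp hT e ht
    simp only [Finset.coe_filter, Set.mem_ofPred_eq, PP, Finset.mem_filter, Finset.mem_product,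
      Finset.mem_range, Finset.mem_univ, and_true]
    refine ⟨⟨hs, ?_⟩, i, rfl⟩
    generalize sg T t = s at hs hrel
    have hm : hp.Moved s (e i) := by
      unfold HalfPeriod.Moved
      intro h
      rcases hrel with ⟨_, hW⟩ | ⟨_, hW⟩
      · rw [(hW i).1, (hW i).2, h] at hne; exact hne rfl
      · rw [(hW i).1, (hW i).2, h] at hne; exact hne rfl
    refine ⟨?_, hm⟩
    have hm' := (hXY.moved_iff hs _).mp hm
    obtain ⟨a, b, c, d⟩ := hXY s hs
    have m1 := hp.pos_mem s hs.le (e i)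
    have m2 := hp.pos_mem (s + 1) hs (e i)
    have hmp : min (hp.pos s (e i)) (hp.pos (s + 1) (e i)) = hp.pos s (X s) := by
      rcases hm' with h | h <;> rw [h] <;> omega
    have hmx : max (hp.pos s (e i)) (hp.pos (s + 1) (e i)) = hp.pos s (X s) + 1 := by
      rcases hm' with h | h <;> rw [h] <;> omega
    have hg : hp.pos s (X s) ∈ GK k := by
      rw [mem_GK] at hmin ⊢
      rcases hrel with ⟨_, hW⟩ | ⟨_, hW⟩
      · rw [(hW i).1, (hW i).2] at hmin; omega
      · rw [(hW i).1, (hW i).2] at hmin; omega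
    rw [mem_GK] at hg
    rcases hg with hg | hg
    · exact ⟨hp.pos s (X s), hg.1, hg.2, Or.inl ((hXY.gate_iff hs _).mpr rfl)⟩
    · refine ⟨30 - hp.pos s (X s), by omega, by omega, Or.inr ((hXY.gate_iff hs _).mpr ?_)⟩
      omega
  · intro q hq q' hq' h
    rw [Finset.mem_coe, Finset.mem_filter, Finset.mem_product, Finset.mem_range] at hq hq'
    rcases q with ⟨t, i⟩
    rcases q' with ⟨t', i'⟩
    simp only [Prod.mk.injEq] at h
    have h1 : t = t' := sg_inj hT hq.1.1 hq'.1.1 h.1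
    have h2 := he i
    rw [h.2, he] at h2
    have := i.2
    have := i'.2
    rw [h1, Fin.ext (show (i : ℕ) = i' by omega)]

set_option linter.constructorNameAsVariable false in
lemma PP_card (hXY : IsXY hp X Y) (k : ℕ) : (PP hp k).card ≤ 2 * hp.NLe k := by
  classical
  have h1 : hp.NLe k = ((Finset.range 435).filter fun t => hp.LeCritical t k).card := by
    unfold HalfPeriod.NLe
    rw [← Set.ncard_coe_finset]
    congr 1
    ext t
    simp [HalfPeriod.steps]
  rw [h1]
  generalize hS : ((Finset.range 435).filter fun t => hp.LeCritical t k) = S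
  have hsub : PP hp k ⊆ S.image (fun t => (t, X t)) ∪ S.image (fun t => (t, Y t)) := by
    intro q hq
    simp only [PP, Finset.mem_filter, Finset.mem_product, Finset.mem_range, Finset.mem_univ,
      and_true] at hq
    rcases q with ⟨t, z⟩
    obtain ⟨ht, hl, hm⟩ := hq
    have htS : t ∈ S := by
      rw [← hS, Finset.mem_filter, Finset.mem_range]; exact ⟨ht, hl⟩
    rw [Finset.mem_union, Finset.mem_image, Finset.mem_image]
    rcases (hXY.moved_iff ht z).mp hm with h | h
    · left; exact ⟨t, htS, by rw [h]⟩
    · right; exact ⟨t, htS, by rw [h]⟩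
  have h2 := Finset.card_le_card hsub
  have h3 := Finset.card_union_le (S.image (fun t => (t, X t))) (S.image (fun t => (t, Y t)))
  have h4 : (S.image (fun t => (t, X t))).card ≤ S.card := Finset.card_image_le
  have h5 : (S.image (fun t => (t, Y t))).card ≤ S.card := Finset.card_image_le
  omega

lemma N15_le (hXY : IsXY hp X Y) {T : ℕ} (hT : T ≤ 435) {e : Fin 10 → Fin 30}
    (he : ∀ i, hp.pos T (e i) = 10 - (i : ℕ)) : N15Mono hp e ≤ (mkTrk hXY hT he).D 15 := by
  classical
  generalize hK : mkTrk hXY hT he = K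
  have hM : K.M = 435 := by rw [← hK]; rfl
  have hKW : K.W = WW hp T e := by rw [← hK]; rfl
  unfold N15Mono Trk.D
  have hsub : {t : ℕ | t < HalfPeriod.steps 30 ∧ hp.GateAt t 15 ∧
      ∃ i j, hp.SwapsAt t (e i) (e j)} ⊆
      (((Trk.pairs.filter fun p => K.gam p.1 p.2 = 15).image
        fun p => sg T (K.tau p.1 p.2) : Finset ℕ) : Set ℕ) := by
    rintro s ⟨hs, hg, i, j, hne, hmi, hmj⟩
    have hs : s < 435 := hs
    obtain ⟨t, ht, hts⟩ := sg_surj hT hs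
    obtain ⟨_, hrel⟩ := WW_rel hp hT e ht
    rw [hts] at hrel
    rw [hXY.gate_iff hs] at hg
    obtain ⟨a, b, c, d⟩ := hXY s hs
    have mv : ∀ k, hp.Moved s (e k) → K.W (t + 1) k ≠ K.W t k := by
      intro k hk
      rw [hKW]
      have m1 := hp.pos_mem s hs.le (e k)
      have m2 := hp.pos_mem (s + 1) hs (e k)
      unfold HalfPeriod.Moved at hk
      rcases hrel with ⟨_, hW⟩ | ⟨_, hW⟩
      · rw [(hW k).1, (hW k).2]; exact hk
      · rw [(hW k).1, (hW k).2]; omega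
    have hni := mv i hmi
    have hnj := mv j hmj
    have hij : i ≠ j := fun h => hne (by rw [h])
    rcases K.step t (by omega) with h1 | ⟨l, h1, h2⟩ | ⟨p, q, hpq, h1, h2, h3, h4⟩
    · exact absurd (h1 i) hni
    · exfalso
      have e1 : i = l := by by_contra hc; exact hni (h2 i hc)
      have e2 : j = l := by by_contra hc; exact hnj (h2 j hc)
      exact hij (e1.trans e2.symm)
    · have hsw : K.Sw t p q := ⟨hpq, h1, h2, h3⟩
      have htau := K.tau_eq (by omega) hsw
      rw [Finset.mem_coe, Finset.mem_image]
      refine ⟨(p, q), ?_, by simp only; rw [← htau, hts]⟩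
      rw [Finset.mem_filter, Trk.mem_pairs]
      refine ⟨hpq, ?_⟩
      simp only [Trk.gam]
      rw [← htau]
      rw [hKW] at h3 ⊢
      have m1 := hp.pos_mem s hs.le (e q)
      have m2 := hp.pos_mem (s + 1) hs (e q)
      have hmq : hp.Moved s (e q) := by
        unfold HalfPeriod.Moved
        intro h
        rcases hrel with ⟨_, hW⟩ | ⟨_, hW⟩
        · rw [(hW q).1, (hW q).2, h] at h3; omega
        · rw [(hW q).1, (hW q).2, h] at h3; omega
      rcases hrel with ⟨_, hW⟩ | ⟨_, hW⟩ <;> rw [(hW q).1] <;> rw [(hW q).1, (hW q).2] at h3 <;>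
        rcases (hXY.moved_iff hs _).mp hmq with h | h <;> rw [h] at h3 ⊢ <;> omega
  have h1 := Set.ncard_le_ncard hsub (Finset.finite_toSet _)
  rw [Set.ncard_coe_finset] at h1
  exact h1.trans Finset.card_image_le

end

lemma combine (K1 K2 K3 : Trk) (N : ℕ → ℕ)
    (h : ∀ k, k ≤ 14 → ∑ g ∈ GK k, (2 * K1.D g + Trk.m g) + ∑ g ∈ GK k, (2 * K2.D g + Trk.m g) +
      ∑ g ∈ GK k, (2 * K3.D g + Trk.m g) ≤ 2 * N k)
    (h10 : N 10 = 165) (h11 : N 11 = 201) (h12 : N 12 = 243) (h13 : N 13 = 291) :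
    K1.D 15 ≤ 19 ∧ K2.D 15 ≤ 19 ∧ K3.D 15 ≤ 19 := by
  have h' : ∀ k, k ≤ 14 → (∑ g ∈ GK k, K1.D g + ∑ g ∈ GK k, K2.D g + ∑ g ∈ GK k, K3.D g) * 2 +
      3 * ∑ g ∈ GK k, Trk.m g ≤ 2 * N k := by
    intro k hk
    have := h k hk
    simp only [Finset.sum_add_distrib, ← Finset.mul_sum] at this
    omega
  have m10 : ∑ g ∈ GK 10, Trk.m g = 110 := by decide
  have m11 : ∑ g ∈ GK 11, Trk.m g = 130 := by decide
  have m12 : ∑ g ∈ GK 12, Trk.m g = 150 := by decide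
  have m13 : ∑ g ∈ GK 13, Trk.m g = 170 := by decide
  have s10 := h' 10 (by norm_num)
  have s11 := h' 11 (by norm_num)
  have s12 := h' 12 (by norm_num)
  have s13 := h' 13 (by norm_num)
  rw [m10, h10] at s10
  rw [m11, h11] at s11
  rw [m12, h12] at s12
  rw [m13, h13] at s13
  have x11 : ∀ f : ℕ → ℕ, ∑ g ∈ GK 11, f g = ∑ g ∈ GK 10, f g + (f 11 + f 19) := by
    intro f
    have : GK 11 = insert 11 (insert 19 (GK 10)) := by decide
    rw [this, Finset.sum_insert (by decide), Finset.sum_insert (by decide)]; ring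
  have x12 : ∀ f : ℕ → ℕ, ∑ g ∈ GK 12, f g = ∑ g ∈ GK 11, f g + (f 12 + f 18) := by
    intro f
    have : GK 12 = insert 12 (insert 18 (GK 11)) := by decide
    rw [this, Finset.sum_insert (by decide), Finset.sum_insert (by decide)]; ring
  have x13 : ∀ f : ℕ → ℕ, ∑ g ∈ GK 13, f g = ∑ g ∈ GK 12, f g + (f 13 + f 17) := by
    intro f
    have : GK 13 = insert 13 (insert 17 (GK 12)) := by decide
    rw [this, Finset.sum_insert (by decide), Finset.sum_insert (by decide)]; ring
  have hF : ∀ K : Trk, ∑ g ∈ GK 10, K.D g = 0 → ∀ i j, i < j → K.gam i j ∈ Finset.Icc 11 19 := by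
    intro K h0 i j hij
    obtain ⟨ht, _, a, b, c⟩ := K.tau_spec hij
    have r1 := K.rng _ ht.le i
    have r2 := K.rng _ ht.le j
    by_contra hc
    have hg : K.gam i j ∈ GK 10 := by
      rw [mem_GK]
      rw [Finset.mem_Icc] at hc
      unfold Trk.gam at *
      omega
    have := Finset.sum_eq_zero_iff.mp h0 _ hg
    unfold Trk.D at this
    rw [Finset.card_eq_zero] at this
    have hm : (i, j) ∈ Trk.pairs.filter fun p => K.gam p.1 p.2 = K.gam i j := by
      rw [Finset.mem_filter, Trk.mem_pairs]; exact ⟨hij, rfl⟩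
    rw [this] at hm
    exact absurd hm (Finset.notMem_empty _)
  have F1 := hF K1 (by omega)
  have F2 := hF K2 (by omega)
  have F3 := hF K3 (by omega)
  simp only [x13, x12, x11] at s11 s12 s13
  have a1 := K1.low1 F1
  have a2 := K2.low1 F2
  have a3 := K3.low1 F3
  have E1 : K1.D 11 + K1.D 19 = 2 := by omega
  have E2 : K2.D 11 + K2.D 19 = 2 := by omega
  have E3 : K3.D 11 + K3.D 19 = 2 := by omega
  have b1 := K1.low2 F1 E1
  have b2 := K2.low2 F2 E2
  have b3 := K3.low2 F3 E3
  have E1' : K1.D 12 + K1.D 18 = 4 := by omega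
  have E2' : K2.D 12 + K2.D 18 = 4 := by omega
  have E3' : K3.D 12 + K3.D 18 = 4 := by omega
  have c1 := K1.low3 F1 E1 E1'
  have c2 := K2.low3 F2 E2 E2'
  have c3 := K3.low3 F3 E3 E3'
  exact ⟨K1.final F1 E1 E1' (by omega), K2.final F2 E2 E2' (by omega),
    K3.final F3 E3 E3' (by omega)⟩

lemma exB {hp : HalfPeriod 30} {X Y : ℕ → Fin 30} (hXY : IsXY hp X Y) {a b c : Fin 10 → Fin 30}
    (h3 : IsThreeDecompLabeling30 hp a b c) :
    ∃ T, T ≤ 435 ∧ ∃ ψ : Fin 10 ≃ Fin 10, ∀ i, hp.pos T (b (ψ i)) = 10 - (i : ℕ) := by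
  classical
  obtain ⟨hinj, ha, hb, hc, h5, _⟩ := h3
  have hex : ∃ t, t = 435 ∨ (t < 435 ∧ ∃ i j, hp.SwapsAt t (c i) (b j)) := ⟨435, Or.inl rfl⟩
  have hspec := Nat.find_spec hex
  have hmin := fun m => Nat.find_min hex (m := m)
  generalize Nat.find hex = T at hspec hmin
  have hT : T ≤ 435 := by rcases hspec with h | h <;> omega
  have swp : ∀ s, s < 435 → hp.SwapsAt s (X s) (Y s) := fun s hs =>
    ⟨hXY.ne hs, (hXY.moved_iff hs _).mpr (Or.inl rfl), (hXY.moved_iff hs _).mpr (Or.inr rfl)⟩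
  have swp' : ∀ s, s < 435 → hp.SwapsAt s (Y s) (X s) := fun s hs =>
    ⟨(hXY.ne hs).symm, (swp s hs).2.2, (swp s hs).2.1⟩
  have hbc : ∀ i j, hp.pos T (b i) < hp.pos T (c j) := by
    intro i j
    by_contra hcon
    have hne : b i ≠ c j := by
      intro h
      have := hb i
      rw [h, hc] at this
      have := i.2
      omega
    have : hp.pos T (b i) ≠ hp.pos T (c j) := fun e => hne (posinj hT e)
    obtain ⟨s, _, s1, s2, s3⟩ := hXY.cross (Nat.zero_le T) hT (x := b i) (y := c j)
      (by rw [hb, hc]; have := i.2; omega) (by omega)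
    have hs := swp' s (by omega)
    rw [s2, s3] at hs
    exact hmin s s1 (Or.inr ⟨by omega, j, i, hs⟩)
  have hba : ∀ i j, hp.pos T (b i) < hp.pos T (a j) := by
    intro i j
    by_contra hcon
    have hne : b i ≠ a j := by
      intro h
      have := hb i
      rw [h, ha] at this
      omega
    have : hp.pos T (b i) ≠ hp.pos T (a j) := fun e => hne (posinj hT e)
    have e1 := pos_end (hp := hp) (b i)
    have e2 := pos_end (hp := hp) (a j)
    rw [hb] at e1
    rw [ha] at e2
    obtain ⟨s, s0, s1, s2, s3⟩ := hXY.cross hT le_rfl (x := a j) (y := b i)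
      (by omega) (by omega)
    have hs := swp s s1
    rw [s2, s3] at hs
    rcases hspec with h | ⟨h, i', j', h'⟩
    · omega
    · have := h5 s T s1 h ⟨j, i, hs⟩ ⟨i', b j', Or.inr ⟨j', rfl⟩, h'⟩
      omega
  have hle : ∀ i, hp.pos T (b i) ≤ 10 := by
    intro i
    have hcard : (Finset.univ : Finset (Fin 10 ⊕ Fin 10)).card ≤
        (Finset.Ioc (hp.pos T (b i)) 30).card := by
      apply Finset.card_le_card_of_injOn (fun z => hp.pos T (Sum.elim a c z))
      · intro z _
        rw [Finset.mem_coe, Finset.mem_Ioc]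
        rcases z with z | z
        · exact ⟨hba i z, (hp.pos_mem T hT _).2⟩
        · exact ⟨hbc i z, (hp.pos_mem T hT _).2⟩
      · intro z _ w _ h
        have h := posinj hT h
        rcases z with z | z <;> rcases w with w | w
        · have := hinj (a₁ := Sum.inl z) (a₂ := Sum.inl w) h
          simpa using this
        · have := hinj (a₁ := Sum.inl z) (a₂ := Sum.inr (Sum.inr w)) h
          simp at this
        · have := hinj (a₁ := Sum.inr (Sum.inr z)) (a₂ := Sum.inl w) h
          simp at this
        · have := hinj (a₁ := Sum.inr (Sum.inr z)) (a₂ := Sum.inr (Sum.inr w)) h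
          simpa using this
    rw [Nat.card_Ioc] at hcard
    simp at hcard
    omega
  have hge : ∀ i, 1 ≤ hp.pos T (b i) := fun i => (hp.pos_mem T hT _).1
  let φ : Fin 10 → Fin 10 := fun i => ⟨10 - hp.pos T (b i), by have := hge i; omega⟩
  have hφ : Function.Injective φ := by
    intro i j h
    have h := Fin.mk.inj_iff.mp h
    have i1 := hle i
    have i2 := hle j
    have := posinj hT (show hp.pos T (b i) = hp.pos T (b j) by omega)
    have := hinj (a₁ := Sum.inr (Sum.inl i)) (a₂ := Sum.inr (Sum.inl j)) this
    simpa using this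
  have hφb : Function.Bijective φ := Finite.injective_iff_bijective.mp hφ
  refine ⟨T, hT, (Equiv.ofBijective φ hφb).symm, fun i => ?_⟩
  have h := (Equiv.ofBijective φ hφb).apply_symm_apply i
  generalize (Equiv.ofBijective φ hφb).symm i = j at h
  have h : φ j = i := h
  rw [← h]
  have := hle j
  simp only [φ]
  omega

/-- `N_15^{aa}(Π) ≤ 19`, `N_15^{bb}(Π) ≤ 19` and `N_15^{cc}(Π) ≤ 19`. -/
theorem N15_mono_le_19 (hp : HalfPeriod 30) (a b c : Fin 10 → Fin 30)
    (h3 : IsThreeDecompLabeling30 hp a b c)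
    (hN1 : ∀ k : ℕ, 1 ≤ k → k ≤ 10 → hp.NLe k = 3 * Nat.choose (k + 1) 2)
    (hN2 : ∀ k : ℕ, 11 ≤ k → k ≤ 13 →
      hp.NLe k = 3 * Nat.choose (k + 1) 2 + 3 * Nat.choose (k - 9) 2) :
    N15Mono hp a ≤ 19 ∧ N15Mono hp b ≤ 19 ∧ N15Mono hp c ≤ 19 := by

  classical
  obtain ⟨X, Y, hXY⟩ := exXY hp
  have hXY : IsXY hp X Y := hXY
  obtain ⟨TB, hTB, ψ, hψ⟩ := exB hXY h3
  obtain ⟨hinj, ha, hb, hc, _, _⟩ := h3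
  have hcE : ∀ i, hp.pos 435 (c i) = 10 - (i : ℕ) := by
    intro i
    have := pos_end (hp := hp) (c i)
    have := hc i
    omega
  have hBle : N15Mono hp b ≤ N15Mono hp (fun i => b (ψ i)) := by
    apply Set.ncard_le_ncard
    · rintro t ⟨h1, h2, i, j, h⟩
      refine ⟨h1, h2, ψ.symm i, ψ.symm j, ?_⟩
      simpa using h
    · exact (Set.finite_lt_nat (HalfPeriod.steps 30)).subset fun t ht => ht.1
  have hψ' : ∀ i, hp.pos TB (b (ψ i)) = 10 - (i : ℕ) := hψ
  have nA := N15_le hXY (Nat.zero_le 435) ha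
  have nB := N15_le hXY hTB hψ'
  have nC := N15_le hXY le_rfl hcE
  have hk := combine (mkTrk hXY (Nat.zero_le 435) ha) (mkTrk hXY hTB hψ')
    (mkTrk hXY le_rfl hcE) hp.NLe ?_ (by rw [hN1 10 (by norm_num) (by norm_num)]; decide)
    (by rw [hN2 11 (by norm_num) (by norm_num)]; decide)
    (by rw [hN2 12 (by norm_num) (by norm_num)]; decide)
    (by rw [hN2 13 (by norm_num) (by norm_num)]; decide)
  · exact ⟨nA.trans hk.1, hBle.trans (nB.trans hk.2.1), nC.trans hk.2.2⟩
  · intro k hk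
    have cA := trk_count hXY (Nat.zero_le 435) ha hk
    have cB := trk_count hXY hTB hψ' hk
    have cC := trk_count hXY le_rfl hcE hk
    have hP := PP_card hXY k
    have d1 : Disjoint ((PP hp k).filter fun q => ∃ i, q.2 = a i)
        ((PP hp k).filter fun q => ∃ i, q.2 = b (ψ i)) := by
      rw [Finset.disjoint_filter]
      rintro q _ ⟨i, h1⟩ ⟨j, h2⟩
      have := hinj (a₁ := Sum.inl i) (a₂ := Sum.inr (Sum.inl (ψ j))) (h1.symm.trans h2)
      simp at this
    have d2 : Disjoint (((PP hp k).filter fun q => ∃ i, q.2 = a i) ∪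
        ((PP hp k).filter fun q => ∃ i, q.2 = b (ψ i)))
        ((PP hp k).filter fun q => ∃ i, q.2 = c i) := by
      rw [Finset.disjoint_union_left, Finset.disjoint_filter, Finset.disjoint_filter]
      constructor
      · rintro q _ ⟨i, h1⟩ ⟨j, h2⟩
        have := hinj (a₁ := Sum.inl i) (a₂ := Sum.inr (Sum.inr j)) (h1.symm.trans h2)
        simp at this
      · rintro q _ ⟨i, h1⟩ ⟨j, h2⟩
        have := hinj (a₁ := Sum.inr (Sum.inl (ψ i))) (a₂ := Sum.inr (Sum.inr j))
          (h1.symm.trans h2)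
        simp at this
    have hu := Finset.card_le_card (Finset.union_subset (Finset.union_subset
      (Finset.filter_subset (fun q => ∃ i, q.2 = a i) (PP hp k))
      (Finset.filter_subset (fun q => ∃ i, q.2 = b (ψ i)) (PP hp k)))
      (Finset.filter_subset (fun q => ∃ i, q.2 = c i) (PP hp k)))
    rw [Finset.card_union_of_disjoint d2, Finset.card_union_of_disjoint d1] at hu
    omega
end

section
/- If N_15^{aa}(Π) = 19, then in the arrangement π_{a_10} of Π immediately after the swap in which a_10 enters the 13-center, the elements occupying positions 11 and 20 are a_1 and a_2 (in one of the two possible orders). -/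
/-- Position `p` lies in the `k`-center (positions `k+1, …, 30-k`) of a `30`-half-period. -/
def InCenter (k p : ℕ) : Prop := k + 1 ≤ p ∧ p ≤ 30 - k

/-- Step `t` is the (first) swap in which element `x` enters the `k`-center. -/
def EntersCenterAt (hp : HalfPeriod 30) (k : ℕ) (x : Fin 30) (t : ℕ) : Prop :=
  t < HalfPeriod.steps 30 ∧ InCenter k (hp.pos (t + 1) x) ∧ ¬ InCenter k (hp.pos t x) ∧
    ∀ s < t, ¬ (InCenter k (hp.pos (s + 1) x) ∧ ¬ InCenter k (hp.pos s x))

/-- Step `t` is the (last) swap in which element `x` leaves the `k`-center. -/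
def LeavesCenterAt (hp : HalfPeriod 30) (k : ℕ) (x : Fin 30) (t : ℕ) : Prop :=
  t < HalfPeriod.steps 30 ∧ InCenter k (hp.pos t x) ∧ ¬ InCenter k (hp.pos (t + 1) x) ∧
    ∀ s, t < s → s < HalfPeriod.steps 30 →
      ¬ (InCenter k (hp.pos s x) ∧ ¬ InCenter k (hp.pos (s + 1) x))
/-- Step data of a 30-half-period. -/
structure SD where
  N : ℕ
  hN : N = 435
  pos : ℕ → Fin 30 → ℕ
  X : ℕ → Fin 30
  Y : ℕ → Fin 30
  mem : ∀ t, t ≤ N → ∀ x, 1 ≤ pos t x ∧ pos t x ≤ 30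
  inj : ∀ t, t ≤ N → Function.Injective (pos t)
  hY : ∀ t, t < N → pos t (Y t) = pos t (X t) + 1
  hX1 : ∀ t, t < N → pos (t + 1) (X t) = pos t (X t) + 1
  hY1 : ∀ t, t < N → pos (t + 1) (Y t) = pos t (X t)
  hz : ∀ t, t < N → ∀ z, z ≠ X t → z ≠ Y t → pos (t + 1) z = pos t z
  rev : ∀ x, pos N x = 31 - pos 0 x

namespace SD

variable (S : SD)

/-- the gate of step `t` -/
def G (t : ℕ) : ℕ := S.pos t (S.X t)

theorem X_ne_Y {t : ℕ} (ht : t < S.N) : S.X t ≠ S.Y t := by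
  intro h
  have := S.hY t ht
  rw [← h] at this
  omega

theorem G_mem {t : ℕ} (ht : t < S.N) : 1 ≤ S.G t ∧ S.G t ≤ 29 := by
  have h1 := S.mem t ht.le (S.X t)
  have h2 := S.mem t ht.le (S.Y t)
  have := S.hY t ht
  unfold G
  omega

theorem step_cases {t : ℕ} (ht : t < S.N) (x : Fin 30) :
    (x = S.X t ∧ S.pos t x = S.G t ∧ S.pos (t+1) x = S.G t + 1) ∨
    (x = S.Y t ∧ S.pos t x = S.G t + 1 ∧ S.pos (t+1) x = S.G t) ∨
    (x ≠ S.X t ∧ x ≠ S.Y t ∧ S.pos (t+1) x = S.pos t x) := by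
  by_cases h1 : x = S.X t
  · left; subst h1; exact ⟨rfl, rfl, S.hX1 t ht⟩
  · by_cases h2 : x = S.Y t
    · right; left; subst h2; exact ⟨rfl, S.hY t ht, S.hY1 t ht⟩
    · right; right; exact ⟨h1, h2, S.hz t ht x h1 h2⟩

/-- If the order of two elements changes at a step, the step swaps them. -/
theorem order_change {t : ℕ} (ht : t < S.N) {x y : Fin 30}
    (h1 : S.pos t x < S.pos t y) (h2 : S.pos (t+1) y < S.pos (t+1) x) :
    S.X t = x ∧ S.Y t = y := by
  have hxy : x ≠ y := by rintro rfl; omega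
  have inj := S.inj t ht.le
  have e1 : S.pos t x = S.G t → x = S.X t := fun h => inj h
  have e2 : S.pos t y = S.G t + 1 → y = S.Y t := fun h => inj (h.trans (S.hY t ht).symm)
  rcases S.step_cases ht x with ⟨a, b, c⟩ | ⟨a, b, c⟩ | ⟨a, a', c⟩ <;>
  rcases S.step_cases ht y with ⟨d, e, f⟩ | ⟨d, e, f⟩ | ⟨d, d', f⟩
  all_goals first
    | exact ⟨a.symm, d.symm⟩
    | exact absurd (a.trans d.symm) hxy
    | (exfalso
       rw [c, f] at h2
       omega)

theorem pair_swapped {x y : Fin 30} (s : ℕ) :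
    ∀ t, s ≤ t → t ≤ S.N → S.pos s x < S.pos s y → S.pos t y < S.pos t x →
    ∃ r, s ≤ r ∧ r < t ∧ S.X r = x ∧ S.Y r = y := by
  intro t hst
  induction t, hst using Nat.le_induction with
  | base => intro _ h1 h2; omega
  | succ t hst ih =>
    intro htN h1 h2
    by_cases h : S.pos t y < S.pos t x
    · obtain ⟨r, a, b, c⟩ := ih (by omega) h1 h
      exact ⟨r, a, by omega, c⟩
    · have hne : x ≠ y := by rintro rfl; omega
      have : S.pos t x ≠ S.pos t y := fun hh => hne (S.inj t (by omega) hh)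
      exact ⟨t, hst, by omega, S.order_change (by omega) (by omega) h2⟩

/-- inverted pairs at time `t` -/
def inv (t : ℕ) : Finset (Fin 30 × Fin 30) :=
  Finset.univ.filter (fun q => S.pos 0 q.1 < S.pos 0 q.2 ∧ S.pos t q.2 < S.pos t q.1)

theorem inv_succ {t : ℕ} (ht : t < S.N) :
    S.inv (t+1) ⊆ insert (S.X t, S.Y t) (S.inv t) := by
  rintro ⟨x, y⟩ h
  simp only [inv, Finset.mem_filter, Finset.mem_univ, true_and, Finset.mem_insert] at h ⊢
  by_cases h' : S.pos t y < S.pos t x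
  · right; exact ⟨h.1, h'⟩
  · left
    have hne : x ≠ y := by rintro rfl; omega
    have : S.pos t x ≠ S.pos t y := fun hh => hne (S.inj t (by omega) hh)
    have := S.order_change ht (by omega) h.2
    rw [this.1, this.2]

theorem inv_succ' {t : ℕ} (ht : t < S.N) (hb : ¬ S.pos 0 (S.X t) < S.pos 0 (S.Y t)) :
    S.inv (t+1) ⊆ S.inv t := by
  intro q h
  have := S.inv_succ ht h
  rw [Finset.mem_insert] at this
  rcases this with rfl | h'
  · simp only [inv, Finset.mem_filter] at h
    exact absurd h.2.1 hb
  · exact h'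

theorem inv_le (t : ℕ) (ht : t ≤ S.N) :
    (S.inv t).card ≤ ((Finset.range t).filter
      (fun s => S.pos 0 (S.X s) < S.pos 0 (S.Y s))).card := by
  induction t with
  | zero =>
    have : S.inv 0 = ∅ := by
      ext q
      simp only [inv, Finset.mem_filter, Finset.mem_univ, true_and, Finset.notMem_empty, iff_false]
      omega
    simp [this]
  | succ t ih =>
    have ih := ih (by omega)
    rw [Finset.range_add_one, Finset.filter_insert]
    split_ifs with h
    · rw [Finset.card_insert_of_notMem (by simp)]
      calc _ ≤ _ := Finset.card_le_card (S.inv_succ (by omega))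
        _ ≤ _ := Finset.card_insert_le _ _
        _ ≤ _ := by omega
    · exact (Finset.card_le_card (S.inv_succ' (by omega) h)).trans ih

theorem inv_last : (S.inv S.N).card = 435 := by
  have h0 : S.inv S.N = Finset.univ.filter (fun q => S.pos 0 q.1 < S.pos 0 q.2) := by
    ext q
    simp only [inv, Finset.mem_filter, Finset.mem_univ, true_and, S.rev]
    have h1 := S.mem 0 (by omega) q.1
    have h2 := S.mem 0 (by omega) q.2
    omega
  have h1 : (Finset.univ.filter (fun q : Fin 30 × Fin 30 => S.pos 0 q.1 < S.pos 0 q.2)).card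
      = (Finset.univ.filter (fun q : Fin 30 × Fin 30 => S.pos 0 q.2 < S.pos 0 q.1)).card := by
    apply Finset.card_bij (fun q _ => (q.2, q.1))
    · intro q hq; simpa using hq
    · rintro ⟨a, b⟩ _ ⟨c, d⟩ _ h; simp at h ⊢; exact ⟨h.2, h.1⟩
    · rintro ⟨a, b⟩ h; exact ⟨(b, a), by simpa using h, rfl⟩
  have h2 : (Finset.univ : Finset (Fin 30 × Fin 30)) =
      (Finset.univ.filter (fun q : Fin 30 × Fin 30 => S.pos 0 q.1 < S.pos 0 q.2)) ∪
      ((Finset.univ.filter (fun q : Fin 30 × Fin 30 => S.pos 0 q.2 < S.pos 0 q.1)) ∪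
      (Finset.univ.image (fun x : Fin 30 => (x, x)))) := by
    ext ⟨x, y⟩
    simp only [Finset.mem_union, Finset.mem_filter, Finset.mem_univ, true_and, true_iff,
      Finset.mem_image, Prod.mk.injEq, exists_eq_left]
    rcases lt_trichotomy (S.pos 0 x) (S.pos 0 y) with h | h | h
    · exact Or.inl h
    · exact Or.inr (Or.inr (S.inj 0 (by omega) h))
    · exact Or.inr (Or.inl h)
  have h3 := congrArg Finset.card h2
  rw [Finset.card_union_of_disjoint, Finset.card_union_of_disjoint,
    Finset.card_image_of_injective, ← h1] at h3
  · simp only [Finset.card_univ, Fintype.card_prod, Fintype.card_fin] at h3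
    rw [h0]; omega
  · intro a b h; simpa using h
  · rw [Finset.disjoint_left]
    rintro ⟨x, y⟩ h h'
    simp only [Finset.mem_filter, Finset.mem_univ, true_and, 
      Finset.mem_image, Prod.mk.injEq, exists_eq_left] at h h'
    subst h'; omega
  · rw [Finset.disjoint_left]
    rintro ⟨x, y⟩ h h'
    simp only [Finset.mem_union, Finset.mem_filter, Finset.mem_univ, true_and, 
      Finset.mem_image, Prod.mk.injEq, exists_eq_left] at h h'
    rcases h' with h' | h'
    · omega
    · subst h'; omega

theorem good {t : ℕ} (ht : t < S.N) : S.pos 0 (S.X t) < S.pos 0 (S.Y t) := by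
  have h1 := S.inv_le S.N le_rfl
  rw [S.inv_last] at h1
  have h2 : (Finset.range S.N).filter (fun s => S.pos 0 (S.X s) < S.pos 0 (S.Y s))
      = Finset.range S.N := by
    apply Finset.eq_of_subset_of_card_le (Finset.filter_subset _ _)
    rw [Finset.card_range]
    have := S.hN
    omega
  have : t ∈ (Finset.range S.N).filter (fun s => S.pos 0 (S.X s) < S.pos 0 (S.Y s)) := by
    rw [h2]; exact Finset.mem_range.2 ht
  exact (Finset.mem_filter.1 this).2

theorem stay {x y : Fin 30} (h0 : S.pos 0 x < S.pos 0 y) (s : ℕ) :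
    ∀ t, s ≤ t → t ≤ S.N → S.pos s y < S.pos s x → S.pos t y < S.pos t x := by
  intro t hst htN h
  by_contra hc
  have hne : x ≠ y := by rintro rfl; omega
  have : S.pos t x ≠ S.pos t y := fun hh => hne (S.inj t (by omega) hh)
  obtain ⟨r, h1, h2, h3, h4⟩ := S.pair_swapped s t hst htN h (by omega)
  have := S.good (t := r) (by omega)
  rw [h3, h4] at this
  omega

theorem once {s t : ℕ} (hs : s < S.N) (ht : t < S.N) (hX : S.X s = S.X t) (hY : S.Y s = S.Y t) :
    s = t := by
  have key : ∀ s t, s < t → t < S.N → S.X s = S.X t → S.Y s = S.Y t → False := by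
    intro s t hst ht hX hY
    have h1 := S.stay (S.good (t := s) (by omega)) (s+1) t (by omega) (by omega)
      (by rw [S.hX1 s (by omega), S.hY1 s (by omega)]; omega)
    have := S.hY t ht
    rw [hX, hY] at h1
    omega
  rcases lt_trichotomy s t with h | h | h
  · exact (key s t h ht hX hY).elim
  · exact h
  · exact (key t s h hs hX.symm hY.symm).elim

/-- the telescoping identity -/
theorem tele (κ : ℕ → ℤ) (x : Fin 30) (s : ℕ) : ∀ e, s ≤ e → e ≤ S.N →
    ∑ t ∈ Finset.Ico s e, ((if S.X t = x then κ (S.G t) else 0) -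
      (if S.Y t = x then κ (S.G t) else 0)) =
    ∑ g ∈ Finset.range (S.pos e x), κ g - ∑ g ∈ Finset.range (S.pos s x), κ g := by
  intro e hse
  induction e, hse using Nat.le_induction with
  | base => intro _; simp
  | succ e hse ih =>
    intro heN
    rw [Finset.sum_Ico_succ_top hse, ih (by omega)]
    have hne := S.X_ne_Y (t := e) (by omega)
    rcases S.step_cases (t := e) (by omega) x with ⟨a, b, c⟩ | ⟨a, b, c⟩ | ⟨a, a', c⟩
    · rw [if_pos a.symm, if_neg (by rw [a]; exact hne.symm), b, c, Finset.sum_range_succ]; ring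
    · rw [if_pos a.symm, if_neg (by rw [a]; exact hne), b, c, Finset.sum_range_succ]; ring
    · rw [if_neg (Ne.symm a), if_neg (Ne.symm a'), c]; ring

end SD
namespace SD

variable (S : SD)

/-- class of an element, by initial position -/
def cl (x : Fin 30) : ℕ := (S.pos 0 x - 1) / 10

/-- indicator of the (≤ k)-critical gates -/
def K (k g : ℕ) : ℤ := if g ≤ k ∨ 30 - k ≤ g then 1 else 0

theorem K_nonneg (k g : ℕ) : 0 ≤ K k g := by unfold K; split_ifs <;> norm_num

theorem K_le (k g : ℕ) : K k g ≤ 1 := by unfold K; split_ifs <;> norm_num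

theorem image_pos (t : ℕ) (ht : t ≤ S.N) :
    Finset.univ.image (S.pos t) = Finset.Icc 1 30 := by
  apply Finset.eq_of_subset_of_card_le
  · intro p hp
    obtain ⟨x, _, rfl⟩ := Finset.mem_image.1 hp
    exact Finset.mem_Icc.2 (S.mem t ht x)
  · rw [Finset.card_image_of_injective _ (S.inj t ht)]
    simp

theorem cl_lt (x : Fin 30) : S.cl x < 3 := by
  have := S.mem 0 (by omega) x
  unfold cl
  omega

theorem card_cl (c : ℕ) (hc : c < 3) :
    (Finset.univ.filter (fun x => S.cl x = c)).card = 10 := by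
  rw [← Finset.card_image_of_injective _ (S.inj 0 (by omega))]
  have : (Finset.univ.filter (fun x => S.cl x = c)).image (S.pos 0)
      = Finset.Icc (10 * c + 1) (10 * c + 10) := by
    ext p
    simp only [Finset.mem_image, Finset.mem_filter, Finset.mem_univ, true_and, Finset.mem_Icc]
    constructor
    · rintro ⟨x, h, rfl⟩
      have := S.mem 0 (by omega) x
      unfold cl at h
      omega
    · intro h
      have : p ∈ Finset.univ.image (S.pos 0) := by
        rw [S.image_pos 0 (by omega), Finset.mem_Icc]; omega
      obtain ⟨x, _, rfl⟩ := Finset.mem_image.1 this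
      refine ⟨x, ?_, rfl⟩
      unfold cl
      omega
  rw [this, Nat.card_Icc]
  omega

/-- threshold data -/
structure Thr where
  Tc : ℕ → ℕ
  le : ∀ c, Tc c ≤ S.N
  pos_le : ∀ x, S.pos (Tc (S.cl x)) x ≤ 10
  diff : ∀ t, t < S.N → S.cl (S.X t) ≠ S.cl (S.Y t) →
    Tc (S.cl (S.X t)) ≤ t ∧ t < Tc (S.cl (S.Y t))

variable {S} (H : S.Thr)

theorem Thr.sum_pos (f : ℕ → ℤ) :
    ∑ x, f (S.pos (H.Tc (S.cl x)) x) = 3 * ∑ p ∈ Finset.Icc 1 10, f p := by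
  rw [← Finset.sum_fiberwise_of_maps_to (s := Finset.univ) (t := Finset.range 3) (g := S.cl)
    (fun x _ => Finset.mem_range.2 (S.cl_lt x))]
  have : ∀ c ∈ Finset.range 3, ∑ x ∈ Finset.univ.filter (fun x => S.cl x = c),
      f (S.pos (H.Tc (S.cl x)) x) = ∑ p ∈ Finset.Icc 1 10, f p := by
    intro c hc
    have hc := Finset.mem_range.1 hc
    have himg : (Finset.univ.filter (fun x => S.cl x = c)).image (S.pos (H.Tc c))
        = Finset.Icc 1 10 := by
      apply Finset.eq_of_subset_of_card_le
      · intro p hp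
        obtain ⟨x, hx, rfl⟩ := Finset.mem_image.1 hp
        have hx := (Finset.mem_filter.1 hx).2
        have := H.pos_le x
        rw [hx] at this
        exact Finset.mem_Icc.2 ⟨(S.mem _ (H.le c) x).1, this⟩
      · rw [Finset.card_image_of_injective _ (S.inj _ (H.le c)), S.card_cl c hc]
        simp
    rw [← himg, Finset.sum_image (fun x _ y _ h => S.inj _ (H.le c) h)]
    apply Finset.sum_congr rfl
    intro x hx
    rw [(Finset.mem_filter.1 hx).2]
  rw [Finset.sum_congr rfl this]
  simp

/-- forward mover -/
def Thr.Fw (t : ℕ) : Fin 30 := if H.Tc (S.cl (S.X t)) ≤ t then S.X t else S.Y t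

/-- backward mover -/
def Thr.Bk (t : ℕ) : Fin 30 := if H.Tc (S.cl (S.X t)) ≤ t then S.Y t else S.X t

/-- forward monochromatic moves -/
def Thr.M (k : ℕ) (x : Fin 30) : ℤ := ∑ t ∈ Finset.range S.N,
  if S.cl (S.X t) = S.cl (S.Y t) ∧ H.Fw t = x then K k (S.G t) else 0

/-- backward monochromatic moves -/
def Thr.Back (k : ℕ) (x : Fin 30) : ℤ := ∑ t ∈ Finset.range S.N,
  if S.cl (S.X t) = S.cl (S.Y t) ∧ H.Bk t = x then K k (S.G t) else 0

variable (S) in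
/-- bichromatic moves -/
def Bi (k : ℕ) (x : Fin 30) : ℤ := ∑ t ∈ Finset.range S.N,
  if S.cl (S.X t) ≠ S.cl (S.Y t) ∧ (S.X t = x ∨ S.Y t = x) then K k (S.G t) else 0

theorem Thr.ident (k : ℕ) (x : Fin 30) :
    H.M k x + Bi S k x - H.Back k x =
      ∑ g ∈ Finset.range (S.pos S.N x), K k g + ∑ g ∈ Finset.range (S.pos 0 x), K k g
      - 2 * ∑ g ∈ Finset.range (S.pos (H.Tc (S.cl x)) x), K k g := by
  have h1 := S.tele (K k) x 0 (H.Tc (S.cl x)) (by omega) (H.le _)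
  have h2 := S.tele (K k) x (H.Tc (S.cl x)) S.N (H.le _) le_rfl
  unfold Thr.M Thr.Back Bi
  rw [← Finset.sum_add_distrib, ← Finset.sum_sub_distrib, Finset.range_eq_Ico,
    ← Finset.sum_Ico_consecutive _ (Nat.zero_le (H.Tc (S.cl x))) (H.le _)]
  have e1 : ∀ t ∈ Finset.Ico 0 (H.Tc (S.cl x)),
      (((if S.cl (S.X t) = S.cl (S.Y t) ∧ H.Fw t = x then K k (S.G t) else 0) +
        (if S.cl (S.X t) ≠ S.cl (S.Y t) ∧ (S.X t = x ∨ S.Y t = x) then K k (S.G t) else 0)) -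
        (if S.cl (S.X t) = S.cl (S.Y t) ∧ H.Bk t = x then K k (S.G t) else 0)) =
      - ((if S.X t = x then K k (S.G t) else 0) - (if S.Y t = x then K k (S.G t) else 0)) := by
    intro t ht
    have ht := (Finset.mem_Ico.1 ht).2
    have htN : t < S.N := lt_of_lt_of_le ht (H.le _)
    have hne := S.X_ne_Y htN
    have hd := H.diff t htN
    unfold Thr.Fw Thr.Bk
    by_cases hs : S.cl (S.X t) = S.cl (S.Y t)
    · by_cases hx : S.X t = x
      · have hy : S.Y t ≠ x := by rw [← hx]; exact hne.symm
        have : ¬ H.Tc (S.cl (S.X t)) ≤ t := by rw [hx]; omega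
        rw [if_neg this, if_neg this]
        have hs' : S.cl x = S.cl (S.Y t) := by rw [← hx]; exact hs
        simp [hs', hx, hy]
      · by_cases hy : S.Y t = x
        · have : ¬ H.Tc (S.cl (S.Y t)) ≤ t := by rw [hy]; omega
          rw [← hs] at this
          rw [if_neg this, if_neg this]
          simp [hs, hx, hy]
        · have hF : (if H.Tc (S.cl (S.X t)) ≤ t then S.X t else S.Y t) ≠ x := by
            split_ifs <;> assumption
          have hB : (if H.Tc (S.cl (S.X t)) ≤ t then S.Y t else S.X t) ≠ x := by
            split_ifs <;> assumption
          simp [hF, hB, hx, hy]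
    · have hd := hd hs
      by_cases hx : S.X t = x
      · rw [hx] at hd; omega
      · simp [hs, hx]
  have e2 : ∀ t ∈ Finset.Ico (H.Tc (S.cl x)) S.N,
      (((if S.cl (S.X t) = S.cl (S.Y t) ∧ H.Fw t = x then K k (S.G t) else 0) +
        (if S.cl (S.X t) ≠ S.cl (S.Y t) ∧ (S.X t = x ∨ S.Y t = x) then K k (S.G t) else 0)) -
        (if S.cl (S.X t) = S.cl (S.Y t) ∧ H.Bk t = x then K k (S.G t) else 0)) =
      ((if S.X t = x then K k (S.G t) else 0) - (if S.Y t = x then K k (S.G t) else 0)) := by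
    intro t ht
    obtain ⟨ht, htN⟩ := Finset.mem_Ico.1 ht
    have hne := S.X_ne_Y htN
    have hd := H.diff t htN
    unfold Thr.Fw Thr.Bk
    by_cases hs : S.cl (S.X t) = S.cl (S.Y t)
    · by_cases hx : S.X t = x
      · have hy : S.Y t ≠ x := by rw [← hx]; exact hne.symm
        have : H.Tc (S.cl (S.X t)) ≤ t := by rw [hx]; omega
        rw [if_pos this, if_pos this]
        have hs' : S.cl x = S.cl (S.Y t) := by rw [← hx]; exact hs
        simp [hs', hx, hy]
      · by_cases hy : S.Y t = x
        · have : H.Tc (S.cl (S.Y t)) ≤ t := by rw [hy]; omega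
          rw [← hs] at this
          rw [if_pos this, if_pos this]
          simp [hs, hx, hy]
        · have hF : (if H.Tc (S.cl (S.X t)) ≤ t then S.X t else S.Y t) ≠ x := by
            split_ifs <;> assumption
          have hB : (if H.Tc (S.cl (S.X t)) ≤ t then S.Y t else S.X t) ≠ x := by
            split_ifs <;> assumption
          simp [hF, hB, hx, hy]
    · have hd := hd hs
      by_cases hy : S.Y t = x
      · rw [hy] at hd; omega
      · simp [hs, hy]
  rw [Finset.sum_congr rfl e1, Finset.sum_congr rfl e2, Finset.sum_neg_distrib, h1, h2]
  ring

theorem K_phi10 : ∀ q ∈ Finset.Icc 1 30, ∑ g ∈ Finset.range q, K 10 g +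
    ∑ g ∈ Finset.range (31 - q), K 10 g = 22 := by decide

theorem K_phi13 : ∀ q ∈ Finset.Icc 1 30, ∑ g ∈ Finset.range q, K 13 g +
    ∑ g ∈ Finset.range (31 - q), K 13 g = 28 := by decide

theorem K_low (k p : ℕ) (hk : 10 ≤ k) (hp : p ≤ 10) : ∑ g ∈ Finset.range p, K k g = p := by
  have : ∀ g ∈ Finset.range p, K k g = 1 := by
    intro g hg
    have := Finset.mem_range.1 hg
    unfold K
    rw [if_pos]; omega
  rw [Finset.sum_congr rfl this]; simp

theorem Thr.ident10 (x : Fin 30) : H.M 10 x + Bi S 10 x - H.Back 10 x =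
    22 - 2 * (S.pos (H.Tc (S.cl x)) x : ℤ) := by
  have h1 := K_phi10 (S.pos 0 x) (Finset.mem_Icc.2 (S.mem 0 (by omega) x))
  have h2 := K_low 10 _ le_rfl (H.pos_le x)
  rw [H.ident, S.rev, h2]
  linarith

theorem Thr.ident13 (x : Fin 30) : H.M 13 x + Bi S 13 x - H.Back 13 x =
    28 - 2 * (S.pos (H.Tc (S.cl x)) x : ℤ) := by
  have h1 := K_phi13 (S.pos 0 x) (Finset.mem_Icc.2 (S.mem 0 (by omega) x))
  have h2 := K_low 13 _ (by norm_num) (H.pos_le x)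
  rw [H.ident, S.rev, h2]
  linarith

variable (S) in
/-- monochromatic critical count -/
def Mono (k : ℕ) : ℤ := ∑ t ∈ Finset.range S.N,
  if S.cl (S.X t) = S.cl (S.Y t) then K k (S.G t) else 0

theorem Thr.sum_M (k : ℕ) : ∑ x, H.M k x = Mono S k := by
  unfold Thr.M Mono
  rw [Finset.sum_comm]
  apply Finset.sum_congr rfl
  intro t _
  by_cases h : S.cl (S.X t) = S.cl (S.Y t) <;> simp [h]

theorem Thr.sum_Back (k : ℕ) : ∑ x, H.Back k x = Mono S k := by
  unfold Thr.Back Mono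
  rw [Finset.sum_comm]
  apply Finset.sum_congr rfl
  intro t _
  by_cases h : S.cl (S.X t) = S.cl (S.Y t) <;> simp [h]

theorem sum_Bi (k : ℕ) : ∑ x, Bi S k x =
    2 * (∑ t ∈ Finset.range S.N, K k (S.G t) - Mono S k) := by
  unfold Bi Mono
  rw [Finset.sum_comm, ← Finset.sum_sub_distrib, Finset.mul_sum]
  apply Finset.sum_congr rfl
  intro t ht
  have hne := S.X_ne_Y (Finset.mem_range.1 ht)
  by_cases h : S.cl (S.X t) = S.cl (S.Y t)
  · simp [h]
  · have : ∀ x, (if S.cl (S.X t) ≠ S.cl (S.Y t) ∧ (S.X t = x ∨ S.Y t = x)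
        then K k (S.G t) else 0) =
        (if S.X t = x then K k (S.G t) else 0) + (if S.Y t = x then K k (S.G t) else 0) := by
      intro x
      by_cases hx : S.X t = x
      · have hy : S.Y t ≠ x := by rw [← hx]; exact hne.symm
        have h' : ¬ S.cl x = S.cl (S.Y t) := by rw [← hx]; exact h
        simp [h', hx, hy]
      · simp [h, hx]
    rw [Finset.sum_congr rfl (fun x _ => this x), Finset.sum_add_distrib]
    simp [h]; ring

theorem Bi_le (k : ℕ) (x : Fin 30) : Bi S k x ≤ 20 := by
  set F := (Finset.range S.N).filter
    (fun t => S.cl (S.X t) ≠ S.cl (S.Y t) ∧ (S.X t = x ∨ S.Y t = x)) with hF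
  have h1 : Bi S k x ≤ F.card := by
    unfold Bi
    rw [← Finset.sum_filter]
    calc _ ≤ ∑ t ∈ F, (1 : ℤ) := Finset.sum_le_sum (fun t _ => K_le _ _)
      _ = F.card := by simp
  have h2 : F.card ≤ (Finset.univ.filter (fun y => S.cl y ≠ S.cl x)).card := by
    apply Finset.card_le_card_of_injOn (fun t => if S.X t = x then S.Y t else S.X t)
    · intro t ht
      simp only [hF, Finset.coe_filter, Finset.mem_range, Set.mem_ofPred_eq] at ht
      simp only [Finset.coe_filter, Finset.mem_univ, true_and, Set.mem_ofPred_eq]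
      obtain ⟨_, h1, h2⟩ := ht
      split_ifs with h
      · rw [← h]; exact h1.symm
      · rw [← h2.resolve_left h]; exact h1
    · intro s hs t ht hst
      simp only [hF, Finset.coe_filter, Finset.mem_range, Set.mem_ofPred_eq] at hs ht
      obtain ⟨hsN, _, hs⟩ := hs
      obtain ⟨htN, _, ht⟩ := ht
      have gs := S.good hsN
      have gt := S.good htN
      simp only at hst
      split_ifs at hst with h1 h2 h2
      · exact S.once hsN htN (h1.trans h2.symm) hst
      · rw [h1, hst] at gs; rw [ht.resolve_left h2] at gt; omega
      · rw [h2, ← hst] at gt; rw [hs.resolve_left h1] at gs; omega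
      · exact S.once hsN htN hst ((hs.resolve_left h1).trans (ht.resolve_left h2).symm)
  have h3 : (Finset.univ.filter (fun y => S.cl y ≠ S.cl x)).card = 20 := by
    have := Finset.card_filter_add_card_filter_not (s := (Finset.univ : Finset (Fin 30))) (fun y => S.cl y = S.cl x)
    rw [S.card_cl _ (S.cl_lt x)] at this
    simp only [Finset.card_univ, Fintype.card_fin] at this
    simp only [ne_eq]
    omega
  rw [h3] at h2
  exact h1.trans (by exact_mod_cast h2)

theorem Thr.M_nonneg (k : ℕ) (x : Fin 30) : 0 ≤ H.M k x :=
  Finset.sum_nonneg fun t _ => by split_ifs; exacts [K_nonneg _ _, le_rfl]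

theorem Thr.Back_nonneg (k : ℕ) (x : Fin 30) : 0 ≤ H.Back k x :=
  Finset.sum_nonneg fun t _ => by split_ifs; exacts [K_nonneg _ _, le_rfl]

include H in
theorem Thr.mono10 (hN : ∑ t ∈ Finset.range S.N, K 10 (S.G t) = 165) : Mono S 10 = 0 := by
  have h1 := Finset.sum_congr (rfl : (Finset.univ : Finset (Fin 30)) = _)
    (fun x _ => H.ident10 x)
  rw [Finset.sum_sub_distrib, Finset.sum_add_distrib, H.sum_M, H.sum_Back, sum_Bi, hN,
    H.sum_pos (fun p => 22 - 2 * (p : ℤ))] at h1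
  have : ∑ p ∈ Finset.Icc 1 10, (22 - 2 * ((p : ℕ) : ℤ)) = 110 := by decide
  rw [this] at h1
  linarith

include H in
theorem Thr.mono13 (hN : ∑ t ∈ Finset.range S.N, K 13 (S.G t) = 291) : Mono S 13 = 36 := by
  have h1 := Finset.sum_congr (rfl : (Finset.univ : Finset (Fin 30)) = _)
    (fun x _ => H.ident13 x)
  rw [Finset.sum_sub_distrib, Finset.sum_add_distrib, H.sum_M, H.sum_Back, sum_Bi, hN,
    H.sum_pos (fun p => 28 - 2 * (p : ℤ))] at h1
  have : ∑ p ∈ Finset.Icc 1 10, (28 - 2 * ((p : ℕ) : ℤ)) = 170 := by decide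
  rw [this] at h1
  linarith

theorem Thr.Back_zero (hN : ∑ t ∈ Finset.range S.N, K 13 (S.G t) = 291) (x : Fin 30)
    (hx : S.pos (H.Tc (S.cl x)) x ≤ 4) : H.Back 13 x = 0 := by
  have hm := H.mono13 hN
  have hs := H.sum_pos (fun p => max 0 (8 - 2 * (p : ℤ)))
  have : ∑ p ∈ Finset.Icc 1 10, (max 0 (8 - 2 * ((p : ℕ) : ℤ))) = 12 := by decide
  rw [this] at hs
  have hle : ∀ y ∈ (Finset.univ : Finset (Fin 30)),
      max 0 (8 - 2 * (S.pos (H.Tc (S.cl y)) y : ℤ)) ≤ H.M 13 y := by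
    intro y _
    have := H.ident13 y
    have h1 := H.Back_nonneg 13 y
    have h2 := Bi_le (S := S) 13 y
    exact max_le (H.M_nonneg 13 y) (by linarith)
  have heq := (Finset.sum_eq_sum_iff_of_le hle).1 (by rw [hs, H.sum_M, hm]; norm_num) x
    (Finset.mem_univ x)
  have := H.ident13 x
  have h1 := H.Back_nonneg 13 x
  have h2 := Bi_le (S := S) 13 x
  have h3 : (S.pos (H.Tc (S.cl x)) x : ℤ) ≤ 4 := by exact_mod_cast hx
  rw [max_eq_right (by linarith)] at heq
  linarith

end SD
namespace SD

/-- the class `A` in terms of step data, with the two facts on its transpositions -/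
structure AD (S : SD) where
  a : Fin 10 → Fin 30
  ha : ∀ i : Fin 10, S.pos 0 (a i) = 10 - (i : ℕ)
  h10 : ∀ t, t < S.N → S.cl (S.X t) = S.cl (S.Y t) → 11 ≤ S.G t ∧ S.G t ≤ 19
  h13 : ∀ t, t < S.N → ∀ i : Fin 10, 6 ≤ (i : ℕ) → S.Y t = a i → 14 ≤ S.G t ∧ S.G t ≤ 16

variable {S : SD} (D : S.AD)

theorem AD.a_inj : Function.Injective D.a := by
  intro i j h
  have h1 := D.ha i
  have h2 := D.ha j
  rw [h] at h1
  apply Fin.ext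
  omega

theorem AD.of_pos {x : Fin 30} (hx : S.pos 0 x ≤ 10) : ∃ i, x = D.a i := by
  have h1 := S.mem 0 (by omega) x
  refine ⟨⟨10 - S.pos 0 x, by omega⟩, ?_⟩
  apply S.inj 0 (by omega)
  rw [D.ha]
  simp only
  omega

theorem AD.cl_a (i : Fin 10) : S.cl (D.a i) = 0 := by
  unfold cl
  rw [D.ha]
  omega

theorem AD.of_cl {x : Fin 30} (hx : S.cl x = 0) : ∃ i, x = D.a i := by
  apply D.of_pos
  unfold cl at hx
  omega

theorem AD.X_of_Y {t : ℕ} (ht : t < S.N) {i : Fin 10} (h : S.Y t = D.a i) :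
    ∃ m, i < m ∧ S.X t = D.a m := by
  have hg := S.good ht
  rw [h, D.ha] at hg
  obtain ⟨m, hm⟩ := D.of_pos (x := S.X t) (by omega)
  refine ⟨m, ?_, hm⟩
  rw [hm, D.ha] at hg
  rw [Fin.lt_def]
  omega

theorem AD.gate_of_Y {t : ℕ} (ht : t < S.N) {i : Fin 10} (h : S.Y t = D.a i) :
    11 ≤ S.G t ∧ S.G t ≤ 19 := by
  obtain ⟨m, _, hm⟩ := D.X_of_Y ht h
  apply D.h10 t ht
  rw [h, hm, D.cl_a, D.cl_a]

theorem AD.lt_pos0 {i j : Fin 10} (h : i < j) : S.pos 0 (D.a j) < S.pos 0 (D.a i) := by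
  rw [D.ha, D.ha]
  rw [Fin.lt_def] at h
  omega

theorem AD.lt_posN {i j : Fin 10} (h : i < j) : S.pos S.N (D.a i) < S.pos S.N (D.a j) := by
  rw [S.rev, S.rev, D.ha, D.ha]
  rw [Fin.lt_def] at h
  omega

/-- a position bound is preserved if no left move happens at that gate -/
theorem stay_ge (x : Fin 30) (q : ℕ) (s : ℕ)
    (h : ∀ t, t < S.N → S.Y t = x → S.G t ≠ q) :
    ∀ t, s ≤ t → t ≤ S.N → q < S.pos s x → q < S.pos t x := by
  intro t hst
  induction t, hst using Nat.le_induction with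
  | base => intro _ h; exact h
  | succ t hst ih =>
    intro htN h0
    have ih := ih (by omega) h0
    rcases S.step_cases (t := t) (by omega) x with ⟨a, b, c⟩ | ⟨a, b, c⟩ | ⟨a, a', c⟩
    · omega
    · have := h t (by omega) a.symm
      omega
    · omega

section
variable {τ : ℕ} (hτ : τ ≤ S.N) (h9 : S.pos τ (D.a 9) = 14)
include hτ h9

theorem AD.ge11 (i : Fin 10) : 11 ≤ S.pos τ (D.a i) := by
  by_cases hi : i = 9
  · subst hi; omega
  have hlt : i < 9 := by omega
  by_contra hc
  obtain ⟨r, h1, h2, h3, h4⟩ := S.pair_swapped 0 τ (by omega) hτ (D.lt_pos0 hlt) (by omega)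
  have hg := D.gate_of_Y (by omega) h4
  have hp := S.hY1 r (by omega)
  rw [h4] at hp
  have := stay_ge (S := S) (D.a i) 10 (r+1)
    (fun t ht hY => by have := D.gate_of_Y ht hY; omega) τ (by omega) hτ
    (by rw [hp]; unfold G at hg; omega)
  omega

theorem AD.le20 (i : Fin 10) : S.pos τ (D.a i) ≤ 20 := by
  by_cases hi : i = 9
  · subst hi; omega
  have hlt : i < 9 := by omega
  by_contra hc
  obtain ⟨r, h1, h2, h3, h4⟩ := S.pair_swapped τ S.N hτ le_rfl (x := D.a 9) (y := D.a i)
    (by omega) (D.lt_posN hlt)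
  have hg := D.gate_of_Y (by omega) h4
  have hp := S.hY r (by omega)
  rw [h4] at hp
  have := stay_ge (S := S) (D.a i) 20 τ
    (fun t ht hY => by have := D.gate_of_Y ht hY; omega) r (by omega) (by omega) (by omega)
  unfold G at hg
  omega

theorem AD.mid (i : Fin 10) (hi6 : 6 ≤ (i : ℕ)) :
    14 ≤ S.pos τ (D.a i) ∧ S.pos τ (D.a i) ≤ 17 := by
  by_cases hi : i = 9
  · subst hi; omega
  have hlt : i < 9 := by omega
  constructor
  · by_contra hc
    obtain ⟨r, h1, h2, h3, h4⟩ := S.pair_swapped 0 τ (by omega) hτ (D.lt_pos0 hlt) (by omega)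
    have hg := D.h13 r (by omega) i hi6 h4
    have hp := S.hY1 r (by omega)
    rw [h4] at hp
    have := stay_ge (S := S) (D.a i) 13 (r+1)
      (fun t ht hY => by have := D.h13 t ht i hi6 hY; omega) τ (by omega) hτ
      (by rw [hp]; unfold G at hg; omega)
    omega
  · by_contra hc
    obtain ⟨r, h1, h2, h3, h4⟩ := S.pair_swapped τ S.N hτ le_rfl (x := D.a 9) (y := D.a i)
      (by omega) (D.lt_posN hlt)
    have hg := D.h13 r (by omega) i hi6 h4
    have hp := S.hY r (by omega)
    rw [h4] at hp
    have := stay_ge (S := S) (D.a i) 17 τ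
      (fun t ht hY => by have := D.h13 t ht i hi6 hY; omega) r (by omega) (by omega) (by omega)
    unfold G at hg
    omega

end

/-- monochromatic right moves through gate 15 -/
def AD.RS (s e : ℕ) (i : Fin 10) : Finset ℕ :=
  (Finset.Ico s e).filter (fun t => S.G t = 15 ∧ S.X t = D.a i ∧ S.cl (S.Y t) = 0)

/-- left moves through gate 15 -/
def AD.LS (s e : ℕ) (i : Fin 10) : Finset ℕ :=
  (Finset.Ico s e).filter (fun t => S.G t = 15 ∧ S.Y t = D.a i)

theorem AD.RL {s e : ℕ} (hse : s ≤ e) (he : e ≤ S.N) (i : Fin 10) :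
    (D.RS s e i).card ≤ (D.LS s e i).card + 1 := by
  have h := S.tele (fun g => if g = 15 then 1 else 0) (D.a i) s e hse he
  rw [Finset.sum_sub_distrib] at h
  have hL : ((D.LS s e i).card : ℤ) = ∑ t ∈ Finset.Ico s e,
      (if S.Y t = D.a i then (if S.G t = 15 then 1 else 0) else 0) := by
    unfold AD.LS
    rw [Finset.card_filter]
    push_cast
    apply Finset.sum_congr rfl
    intro t _
    split_ifs <;> simp_all
  have hR : ((D.RS s e i).card : ℤ) ≤ ∑ t ∈ Finset.Ico s e,
      (if S.X t = D.a i then (if S.G t = 15 then 1 else 0) else 0) := by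
    unfold AD.RS
    rw [Finset.card_filter]
    push_cast
    apply Finset.sum_le_sum
    intro t _
    split_ifs <;> simp_all
  have hphi : ∀ p, 0 ≤ ∑ g ∈ Finset.range p, (if g = 15 then (1 : ℤ) else 0) ∧
      ∑ g ∈ Finset.range p, (if g = 15 then (1 : ℤ) else 0) ≤ 1 := by
    intro p
    rw [Finset.sum_ite_eq']
    split_ifs <;> norm_num
  have h1 := hphi (S.pos e (D.a i))
  have h2 := hphi (S.pos s (D.a i))
  have : ((D.RS s e i).card : ℤ) ≤ (D.LS s e i).card + 1 := by
    linarith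
  exact_mod_cast this

theorem AD.RS_inj {s e : ℕ} (he : e ≤ S.N) (i : Fin 10) (P : Fin 10 → Prop) [DecidablePred P]
    (hP : ∀ t, s ≤ t → t < e → S.X t = D.a i → ∀ l, l < i → S.Y t = D.a l → P l) :
    (D.RS s e i).card ≤ (Finset.univ.filter P).card := by
  rw [← Finset.card_image_of_injective (Finset.univ.filter P) D.a_inj]
  apply Finset.card_le_card_of_injOn S.Y
  · intro t ht
    have ht := Finset.mem_coe.1 ht
    simp only [AD.RS, Finset.mem_filter, Finset.mem_Ico] at ht
    obtain ⟨⟨h1, h2⟩, h3, h4, h5⟩ := ht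
    obtain ⟨l, hl⟩ := D.of_cl h5
    obtain ⟨m, hm1, hm2⟩ := D.X_of_Y (by omega) hl
    have hmi : m = i := D.a_inj (hm2.symm.trans h4)
    subst hmi
    rw [Finset.mem_coe, hl]
    exact Finset.mem_image_of_mem _ (Finset.mem_filter.2 ⟨Finset.mem_univ _,
      hP t h1 h2 h4 l hm1 hl⟩)
  · intro t ht u hu h
    have ht := Finset.mem_coe.1 ht
    have hu := Finset.mem_coe.1 hu
    simp only [AD.RS, Finset.mem_filter, Finset.mem_Ico] at ht hu
    exact S.once (by omega) (by omega) (ht.2.2.1.trans hu.2.2.1.symm) h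

theorem AD.LS_inj {s e : ℕ} (he : e ≤ S.N) (i : Fin 10) (P : Fin 10 → Prop) [DecidablePred P]
    (hP : ∀ t, s ≤ t → t < e → S.Y t = D.a i → ∀ l, i < l → S.X t = D.a l → P l) :
    (D.LS s e i).card ≤ (Finset.univ.filter P).card := by
  rw [← Finset.card_image_of_injective (Finset.univ.filter P) D.a_inj]
  apply Finset.card_le_card_of_injOn S.X
  · intro t ht
    have ht := Finset.mem_coe.1 ht
    simp only [AD.LS, Finset.mem_filter, Finset.mem_Ico] at ht
    obtain ⟨⟨h1, h2⟩, h3, h4⟩ := ht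
    obtain ⟨m, hm1, hm2⟩ := D.X_of_Y (by omega) h4
    rw [Finset.mem_coe, hm2]
    exact Finset.mem_image_of_mem _ (Finset.mem_filter.2 ⟨Finset.mem_univ _,
      hP t h1 h2 h4 m hm1 hm2⟩)
  · intro t ht u hu h
    have ht := Finset.mem_coe.1 ht
    have hu := Finset.mem_coe.1 hu
    simp only [AD.LS, Finset.mem_filter, Finset.mem_Ico] at ht hu
    exact S.once (by omega) (by omega) h (ht.2.2.trans hu.2.2.symm)

theorem AD.RS_split {τ : ℕ} (hτ : τ ≤ S.N) (i : Fin 10) :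
    (D.RS 0 S.N i).card ≤ (D.RS 0 τ i).card + (D.RS τ S.N i).card := by
  refine le_trans (Finset.card_le_card ?_) (Finset.card_union_le _ _)
  intro t ht
  simp only [AD.RS, Finset.mem_filter, Finset.mem_Ico, Finset.mem_union] at ht ⊢
  by_cases h : t < τ
  · left; exact ⟨⟨by omega, h⟩, ht.2⟩
  · right; exact ⟨⟨by omega, ht.1.2⟩, ht.2⟩

theorem AD.RS_le (i : Fin 10) : (D.RS 0 S.N i).card ≤ i := by
  refine (D.RS_inj le_rfl i (fun l => l < i) (fun t _ _ _ l hl _ => hl)).trans ?_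
  rw [Finset.filter_gt_eq_Iio, Fin.card_Iio]

/-- two disjoint predicates, both contained in a third one -/
theorem card_two (P Q R : Fin 10 → Prop) [DecidablePred P] [DecidablePred Q] [DecidablePred R]
    (hPR : ∀ l, P l → R l) (hQR : ∀ l, Q l → R l) (hPQ : ∀ l, P l → ¬ Q l) :
    (Finset.univ.filter P).card + (Finset.univ.filter Q).card ≤ (Finset.univ.filter R).card := by
  rw [← Finset.card_union_of_disjoint]
  · apply Finset.card_le_card
    intro l hl
    simp only [Finset.mem_union, Finset.mem_filter, Finset.mem_univ, true_and] at hl ⊢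
    rcases hl with h | h
    · exact hPR l h
    · exact hQR l h
  · rw [Finset.disjoint_left]
    intro l h1 h2
    exact hPQ l (Finset.mem_filter.1 h1).2 (Finset.mem_filter.1 h2).2

section
variable {τ : ℕ} (hτ : τ ≤ S.N) (h9 : S.pos τ (D.a 9) = 14)
include hτ h9

theorem AD.lev_left (i : Fin 10) : (D.RS 0 S.N i).card ≤ S.pos τ (D.a i) - 10 := by
  have h1 := D.RS_split hτ i
  have h2 := D.RL hτ le_rfl i
  have h3 := D.RS_inj hτ (s := 0) i (fun l => l < i ∧ S.pos τ (D.a l) < S.pos τ (D.a i)) (by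
    intro t _ ht hX l hl hY
    refine ⟨hl, S.stay (D.lt_pos0 hl) (t+1) τ (by omega) hτ ?_⟩
    have e1 := S.hX1 t (by omega)
    have e2 := S.hY1 t (by omega)
    rw [hX] at e1 e2
    rw [hY] at e2
    omega)
  have h4 := D.LS_inj le_rfl (s := τ) i (fun l => i < l ∧ S.pos τ (D.a l) < S.pos τ (D.a i)) (by
    intro t ht htN hY l hl hX
    refine ⟨hl, ?_⟩
    by_contra hc
    have hne : S.pos τ (D.a l) ≠ S.pos τ (D.a i) := fun h =>
      hl.ne (D.a_inj (S.inj τ hτ h)).symm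
    have := S.stay (D.lt_pos0 hl) τ t ht (by omega) (by omega)
    have e := S.hY t htN
    rw [hX, hY] at e
    omega)
  have h5 := card_two (fun l => l < i ∧ S.pos τ (D.a l) < S.pos τ (D.a i))
    (fun l => i < l ∧ S.pos τ (D.a l) < S.pos τ (D.a i))
    (fun l => S.pos τ (D.a l) < S.pos τ (D.a i)) (fun l h => h.2) (fun l h => h.2)
    (fun l h h' => by have := h.1; have := h'.1; omega)
  have h6 : (Finset.univ.filter (fun l => S.pos τ (D.a l) < S.pos τ (D.a i))).card ≤
      (Finset.Ico 11 (S.pos τ (D.a i))).card := by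
    apply Finset.card_le_card_of_injOn (fun l => S.pos τ (D.a l))
    · intro l hl
      have hl := (Finset.mem_filter.1 (Finset.mem_coe.1 hl)).2
      exact Finset.mem_coe.2 (Finset.mem_Ico.2 ⟨D.ge11 hτ h9 l, hl⟩)
    · intro l _ m _ h
      exact D.a_inj (S.inj τ hτ h)
  rw [Nat.card_Ico] at h6
  have := D.ge11 hτ h9 i
  omega

theorem AD.lev_right (i : Fin 10) : (D.RS 0 S.N i).card ≤ 21 - S.pos τ (D.a i) := by
  have h1 := D.RS_split hτ i
  have h2 := D.RL (Nat.zero_le τ) hτ i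
  have h3 := D.RS_inj le_rfl (s := τ) i (fun l => l < i ∧ S.pos τ (D.a i) < S.pos τ (D.a l)) (by
    intro t ht htN hX l hl hY
    refine ⟨hl, ?_⟩
    by_contra hc
    have hne : S.pos τ (D.a l) ≠ S.pos τ (D.a i) := fun h =>
      hl.ne (D.a_inj (S.inj τ hτ h))
    have := S.stay (D.lt_pos0 hl) τ t ht (by omega) (by omega)
    have e := S.hY t htN
    rw [hX, hY] at e
    omega)
  have h4 := D.LS_inj hτ (s := 0) i (fun l => i < l ∧ S.pos τ (D.a i) < S.pos τ (D.a l)) (by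
    intro t _ ht hY l hl hX
    refine ⟨hl, S.stay (D.lt_pos0 hl) (t+1) τ (by omega) hτ ?_⟩
    have e1 := S.hX1 t (by omega)
    have e2 := S.hY1 t (by omega)
    rw [hX] at e1 e2
    rw [hY] at e2
    omega)
  have h5 := card_two (fun l => l < i ∧ S.pos τ (D.a i) < S.pos τ (D.a l))
    (fun l => i < l ∧ S.pos τ (D.a i) < S.pos τ (D.a l))
    (fun l => S.pos τ (D.a i) < S.pos τ (D.a l)) (fun l h => h.2) (fun l h => h.2)
    (fun l h h' => by have := h.1; have := h'.1; omega)
  have h6 : (Finset.univ.filter (fun l => S.pos τ (D.a i) < S.pos τ (D.a l))).card ≤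
      (Finset.Ioc (S.pos τ (D.a i)) 20).card := by
    apply Finset.card_le_card_of_injOn (fun l => S.pos τ (D.a l))
    · intro l hl
      have hl := (Finset.mem_filter.1 (Finset.mem_coe.1 hl)).2
      exact Finset.mem_coe.2 (Finset.mem_Ioc.2 ⟨hl, D.le20 hτ h9 l⟩)
    · intro l _ m _ h
      exact D.a_inj (S.inj τ hτ h)
  rw [Nat.card_Ioc] at h6
  have := D.le20 hτ h9 i
  omega

end

/-- steps swapping a given pair in gate 15 -/
def AD.E (m i : Fin 10) : Finset ℕ :=
  (Finset.Ico 0 S.N).filter (fun t => S.G t = 15 ∧ S.X t = D.a m ∧ S.Y t = D.a i)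

theorem AD.E_le (m i : Fin 10) : (D.E m i).card ≤ 1 := by
  rw [Finset.card_le_one]
  intro s hs t ht
  simp only [AD.E, Finset.mem_filter, Finset.mem_Ico] at hs ht
  exact S.once hs.1.2 ht.1.2 (hs.2.2.1.trans ht.2.2.1.symm) (hs.2.2.2.trans ht.2.2.2.symm)

theorem AD.LS_sum (i : Fin 10) :
    (D.LS 0 S.N i).card ≤ ∑ m ∈ Finset.univ.filter (fun m => i < m), (D.E m i).card := by
  refine le_trans (Finset.card_le_card ?_) Finset.card_biUnion_le
  intro t ht
  simp only [AD.LS, Finset.mem_filter, Finset.mem_Ico] at ht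
  obtain ⟨m, hm1, hm2⟩ := D.X_of_Y ht.1.2 ht.2.2
  rw [Finset.mem_biUnion]
  refine ⟨m, Finset.mem_filter.2 ⟨Finset.mem_univ _, hm1⟩, ?_⟩
  simp only [AD.E, Finset.mem_filter, Finset.mem_Ico]
  exact ⟨ht.1, ht.2.1, hm2, ht.2.2⟩

theorem AD.RS_ge (m : Fin 10) : ∑ i, (D.E m i).card ≤ (D.RS 0 S.N m).card := by
  rw [← Finset.card_biUnion]
  · apply Finset.card_le_card
    intro t ht
    rw [Finset.mem_biUnion] at ht
    obtain ⟨i, _, ht⟩ := ht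
    simp only [AD.E, AD.RS, Finset.mem_filter, Finset.mem_Ico] at ht ⊢
    refine ⟨ht.1, ht.2.1, ht.2.2.1, ?_⟩
    rw [ht.2.2.2, D.cl_a]
  · intro i _ j _ hij
    rw [Function.onFun, Finset.disjoint_left]
    intro t h1 h2
    simp only [AD.E, Finset.mem_filter] at h1 h2
    exact hij (D.a_inj (h1.2.2.2.symm.trans h2.2.2.2))

theorem AD.top : (D.RS 0 S.N 6).card + (D.RS 0 S.N 7).card + (D.RS 0 S.N 8).card
    + (D.RS 0 S.N 9).card ≤ 8 := by
  have r6 := D.RL (Nat.zero_le _) le_rfl 6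
  have r7 := D.RL (Nat.zero_le _) le_rfl 7
  have r8 := D.RL (Nat.zero_le _) le_rfl 8
  have r9 := D.RL (Nat.zero_le _) le_rfl 9
  have l6 := D.LS_sum 6
  have l7 := D.LS_sum 7
  have l8 := D.LS_sum 8
  have l9 := D.LS_sum 9
  have f6 : Finset.univ.filter (fun m : Fin 10 => 6 < m) = {7, 8, 9} := by decide
  have f7 : Finset.univ.filter (fun m : Fin 10 => 7 < m) = {8, 9} := by decide
  have f8 : Finset.univ.filter (fun m : Fin 10 => 8 < m) = {9} := by decide
  have f9 : Finset.univ.filter (fun m : Fin 10 => 9 < m) = ∅ := by decide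
  rw [f6, Finset.sum_insert (by decide), Finset.sum_insert (by decide),
    Finset.sum_singleton] at l6
  rw [f7, Finset.sum_insert (by decide), Finset.sum_singleton] at l7
  rw [f8, Finset.sum_singleton] at l8
  rw [f9, Finset.sum_empty] at l9
  have e76 := D.E_le 7 6
  have e86 := D.E_le 8 6
  have e87 := D.E_le 8 7
  have g9 := D.RS_ge 9
  have g9' : ∑ i ∈ ({6, 7, 8} : Finset (Fin 10)), (D.E 9 i).card ≤ ∑ i, (D.E 9 i).card :=
    Finset.sum_le_sum_of_subset (Finset.subset_univ _)
  rw [Finset.sum_insert (by decide), Finset.sum_insert (by decide),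
    Finset.sum_singleton] at g9'
  omega

theorem AD.core {τ : ℕ} (hτ : τ ≤ S.N) (h9 : S.pos τ (D.a 9) = 14)
    (h19 : 19 ≤ ((Finset.Ico 0 S.N).filter
      (fun t => S.G t = 15 ∧ S.cl (S.X t) = 0 ∧ S.cl (S.Y t) = 0)).card) :
    (S.pos τ (D.a 0) = 11 ∧ S.pos τ (D.a 1) = 20) ∨
    (S.pos τ (D.a 1) = 11 ∧ S.pos τ (D.a 0) = 20) := by
  have hsum : 19 ≤ ∑ i, (D.RS 0 S.N i).card := by
    refine h19.trans (le_trans (Finset.card_le_card ?_) Finset.card_biUnion_le)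
    intro t ht
    simp only [Finset.mem_filter] at ht
    obtain ⟨i, hi⟩ := D.of_cl ht.2.2.1
    rw [Finset.mem_biUnion]
    refine ⟨i, Finset.mem_univ _, ?_⟩
    simp only [AD.RS, Finset.mem_filter]
    exact ⟨ht.1, ht.2.1, hi, ht.2.2.2⟩
  set g : ℕ → ℕ := fun p => if p ≤ 13 then p - 10 else if 18 ≤ p then 21 - p else 0 with hg
  have himg : Finset.univ.image (fun i => S.pos τ (D.a i)) = Finset.Icc 11 20 := by
    apply Finset.eq_of_subset_of_card_le
    · intro p hp
      obtain ⟨i, _, rfl⟩ := Finset.mem_image.1 hp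
      exact Finset.mem_Icc.2 ⟨D.ge11 hτ h9 i, D.le20 hτ h9 i⟩
    · rw [Finset.card_image_of_injective _ (fun i j h => D.a_inj (S.inj τ hτ h))]
      simp
  have hgsum : ∑ i, g (S.pos τ (D.a i)) = 12 := by
    have : ∑ p ∈ Finset.Icc 11 20, g p = 12 := by rw [hg]; decide
    rw [← himg, Finset.sum_image (fun i _ j _ h => D.a_inj (S.inj τ hτ h))] at this
    exact this
  have hnot : ∀ i : Fin 10, (i : ℕ) < 6 →
      ¬ (14 ≤ S.pos τ (D.a i) ∧ S.pos τ (D.a i) ≤ 17) := by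
    intro i hi
    rintro ⟨ha, hb⟩
    have hcard : (insert i ({6, 7, 8, 9} : Finset (Fin 10))).card ≤
        (Finset.Icc 14 17).card := by
      apply Finset.card_le_card_of_injOn (fun l => S.pos τ (D.a l))
      · intro l hl
        apply Finset.mem_coe.2
        rw [Finset.mem_Icc]
        rcases Finset.mem_insert.1 (Finset.mem_coe.1 hl) with rfl | hl
        · exact ⟨ha, hb⟩
        · apply D.mid hτ h9 l
          fin_cases hl <;> simp
      · intro l _ m _ h
        exact D.a_inj (S.inj τ hτ h)
    rw [Finset.card_insert_of_notMem] at hcard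
    · simp at hcard
    · intro hl
      fin_cases hl <;> simp at hi
  have hle : ∀ i : Fin 10, (i : ℕ) < 6 → (D.RS 0 S.N i).card ≤ g (S.pos τ (D.a i)) := by
    intro i hi
    have h1 := D.lev_left hτ h9 i
    have h2 := D.lev_right hτ h9 i
    have h3 := hnot i hi
    simp only [hg]
    split_ifs <;> omega
  have t1 := D.top
  have m0 := D.RS_le 0
  have m1 := D.RS_le 1
  have q2 := hle 2 (by decide)
  have q3 := hle 3 (by decide)
  have q4 := hle 4 (by decide)
  have q5 := hle 5 (by decide)
  have hs0 : ∑ i, (D.RS 0 S.N i).card = (D.RS 0 S.N 0).card + (D.RS 0 S.N 1).card +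
    (D.RS 0 S.N 2).card + (D.RS 0 S.N 3).card + (D.RS 0 S.N 4).card + (D.RS 0 S.N 5).card +
    (D.RS 0 S.N 6).card + (D.RS 0 S.N 7).card + (D.RS 0 S.N 8).card + (D.RS 0 S.N 9).card := by
    simp only [Fin.sum_univ_succ, Fin.sum_univ_zero]; simp [add_assoc]
  have hs1 : ∑ i, g (S.pos τ (D.a i)) = g (S.pos τ (D.a 0)) + g (S.pos τ (D.a 1)) +
    g (S.pos τ (D.a 2)) + g (S.pos τ (D.a 3)) + g (S.pos τ (D.a 4)) + g (S.pos τ (D.a 5)) +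
    g (S.pos τ (D.a 6)) + g (S.pos τ (D.a 7)) + g (S.pos τ (D.a 8)) + g (S.pos τ (D.a 9)) := by
    simp only [Fin.sum_univ_succ, Fin.sum_univ_zero]; simp [add_assoc]
  have v0 : ((0 : Fin 10) : ℕ) = 0 := rfl
  have v1 : ((1 : Fin 10) : ℕ) = 1 := rfl
  rw [v0] at m0
  rw [v1] at m1
  have hkey : g (S.pos τ (D.a 0)) + g (S.pos τ (D.a 1)) ≤ 2 := by omega
  have hne : S.pos τ (D.a 0) ≠ S.pos τ (D.a 1) := fun h =>
    absurd (D.a_inj (S.inj τ hτ h)) (by decide)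
  have hg1 : ∀ i : Fin 10, (i : ℕ) < 6 → 1 ≤ g (S.pos τ (D.a i)) ∧
      (g (S.pos τ (D.a i)) ≤ 1 → S.pos τ (D.a i) = 11 ∨ S.pos τ (D.a i) = 20) := by
    intro i hi
    have h1 := D.ge11 hτ h9 i
    have h2 := D.le20 hτ h9 i
    have h3 := hnot i hi
    simp only [hg]
    split_ifs <;> omega
  have w0 := hg1 0 (by decide)
  have w1 := hg1 1 (by decide)
  have := w0.2 (by omega)
  have := w1.2 (by omega)
  omega

end SD
namespace SD

variable (S : SD)

theorem exists_thr
    (hAB : ∀ s t, s < S.N → t < S.N → S.cl (S.X s) = 0 → S.cl (S.Y s) = 1 →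
      S.cl (S.X t) ≠ 2 → S.cl (S.Y t) = 2 → s < t) :
    ∃ H : S.Thr, H.Tc 0 = 0 := by
  classical
  have hex : ∃ t, S.N ≤ t ∨ (S.cl (S.X t) ≠ 2 ∧ S.cl (S.Y t) = 2) := ⟨S.N, Or.inl le_rfl⟩
  obtain ⟨T, hT, hmin⟩ : ∃ T, (S.N ≤ T ∨ (S.cl (S.X T) ≠ 2 ∧ S.cl (S.Y T) = 2)) ∧
      ∀ t, t < T → ¬ (S.N ≤ t ∨ (S.cl (S.X t) ≠ 2 ∧ S.cl (S.Y t) = 2)) :=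
    ⟨Nat.find hex, Nat.find_spec hex, fun t ht => Nat.find_min hex ht⟩
  have hTN : T ≤ S.N := by
    by_contra h
    exact hmin S.N (by omega) (Or.inl le_rfl)
  have hABT : ∀ s, s < S.N → S.cl (S.X s) = 0 → S.cl (S.Y s) = 1 → s < T := by
    intro s hs h0 h1
    rcases hT with h | h
    · omega
    · by_cases hc : T < S.N
      · exact hAB s T hs hc h0 h1 h.1 h.2
      · omega
  have hB : ∀ x, S.cl x = 1 → S.pos T x ≤ 10 := by
    intro x hx
    have hright : ∀ y, S.cl y = 0 ∨ S.cl y = 2 → S.pos T x < S.pos T y := by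
      intro y hy
      have hne : y ≠ x := by rintro rfl; omega
      have hpne : S.pos T y ≠ S.pos T x := fun h => hne (S.inj T hTN h)
      have m1 := S.mem 0 (by omega) x
      have m2 := S.mem 0 (by omega) y
      by_contra hc
      rcases hy with hy | hy
      · have hlt : S.pos 0 y < S.pos 0 x := by unfold cl at hx hy; omega
        obtain ⟨r, h1, h2, h3, h4⟩ := S.pair_swapped T S.N hTN le_rfl (x := y) (y := x)
          (by omega) (by rw [S.rev, S.rev]; omega)
        have := hABT r h2 (by rw [h3, hy]) (by rw [h4, hx])
        omega
      · have hlt : S.pos 0 x < S.pos 0 y := by unfold cl at hx hy; omega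
        obtain ⟨r, h1, h2, h3, h4⟩ := S.pair_swapped 0 T (by omega) hTN (x := x) (y := y)
          hlt (by omega)
        apply hmin r h2
        right
        rw [h3, h4]
        omega
    have hcard : ((Finset.univ.filter (fun y => S.cl y = 0)) ∪
        (Finset.univ.filter (fun y => S.cl y = 2))).card ≤ (Finset.Ioc (S.pos T x) 30).card := by
      apply Finset.card_le_card_of_injOn (S.pos T)
      · intro y hy
        have hy := Finset.mem_coe.1 hy
        simp only [Finset.mem_union, Finset.mem_filter, Finset.mem_univ, true_and] at hy
        exact Finset.mem_coe.2 (Finset.mem_Ioc.2 ⟨hright y hy, (S.mem T hTN y).2⟩)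
      · intro y _ z _ h
        exact S.inj T hTN h
    rw [Finset.card_union_of_disjoint, S.card_cl 0 (by norm_num), S.card_cl 2 (by norm_num),
      Nat.card_Ioc] at hcard
    · omega
    · rw [Finset.disjoint_left]
      intro y h1 h2
      simp only [Finset.mem_filter] at h1 h2
      omega
  refine ⟨⟨fun c => if c = 0 then 0 else if c = 1 then T else S.N, ?_, ?_, ?_⟩, rfl⟩
  · intro c
    split_ifs <;> omega
  · intro x
    have m := S.mem 0 (by omega) x
    split_ifs with h0 h1
    · unfold cl at h0
      omega
    · exact hB x h1
    · rw [S.rev]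
      have := S.cl_lt x
      unfold cl at *
      omega
  · intro t ht hne
    have hg := S.good ht
    have hlt : S.cl (S.X t) < S.cl (S.Y t) := by
      unfold cl at *
      omega
    have := S.cl_lt (S.Y t)
    have hAB' := hABT t ht
    have hm : t < T → ¬ (S.cl (S.X t) ≠ 2 ∧ S.cl (S.Y t) = 2) := fun h h' =>
      hmin t h (Or.inr h')
    split_ifs <;> omega

/-- from the counting hypotheses to the data on the class `A` -/
theorem exists_AD (H : S.Thr) (hH : H.Tc 0 = 0)
    (h10 : ∑ t ∈ Finset.range S.N, K 10 (S.G t) = 165)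
    (h13 : ∑ t ∈ Finset.range S.N, K 13 (S.G t) = 291)
    (a : Fin 10 → Fin 30) (ha : ∀ i : Fin 10, S.pos 0 (a i) = 10 - (i : ℕ)) :
    ∃ D : S.AD, D.a = a := by
  refine ⟨⟨a, ha, ?_, ?_⟩, rfl⟩
  · intro t ht hcl
    have h := H.mono10 h10
    unfold Mono at h
    rw [Finset.sum_eq_zero_iff_of_nonneg] at h
    · have := h t (Finset.mem_range.2 ht)
      rw [if_pos hcl] at this
      unfold K at this
      split_ifs at this with hc <;> omega
    · intro t _
      split_ifs
      · exact K_nonneg _ _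
      · exact le_rfl
  · intro t ht i hi hY
    have hcla : S.cl (a i) = 0 := by
      unfold cl
      rw [ha]
      omega
    have h := H.Back_zero h13 (a i) (by rw [hcla, hH, ha]; omega)
    unfold Thr.Back at h
    rw [Finset.sum_eq_zero_iff_of_nonneg] at h
    · have h := h t (Finset.mem_range.2 ht)
      have hg := S.good ht
      have hX : S.cl (S.X t) = 0 := by
        rw [hY, ha] at hg
        unfold cl
        omega
      rw [if_pos] at h
      · unfold K at h
        split_ifs at h with hc <;> omega
      · refine ⟨by rw [hX, hY, hcla], ?_⟩
        unfold Thr.Bk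
        rw [hX, hH, if_pos (Nat.zero_le _), hY]
    · intro t _
      split_ifs
      · exact K_nonneg _ _
      · exact le_rfl

end SD

theorem exists_SD (hp : HalfPeriod 30) : ∃ S : SD, S.N = HalfPeriod.steps 30 ∧ S.pos = hp.pos := by
  have e : 30 * (30 - 1) / 2 = 435 := by norm_num
  have h : ∀ t, ∃ x y : Fin 30, t < 435 →
    (hp.pos t y = hp.pos t x + 1 ∧ hp.pos (t + 1) x = hp.pos t x + 1 ∧
      hp.pos (t + 1) y = hp.pos t x ∧
      ∀ z, z ≠ x → z ≠ y → hp.pos (t + 1) z = hp.pos t z) := by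
    intro t
    by_cases ht : t < 435
    · obtain ⟨x, y, h⟩ := hp.step t (by omega)
      exact ⟨x, y, fun _ => h⟩
    · exact ⟨0, 0, fun h => absurd h ht⟩
  choose X Y hXY using h
  exact ⟨⟨435, rfl, hp.pos, X, Y, fun t ht => hp.pos_mem t (by omega),
    fun t ht => hp.pos_inj t (by omega), fun t ht => (hXY t ht).1, fun t ht => (hXY t ht).2.1,
    fun t ht => (hXY t ht).2.2.1, fun t ht => (hXY t ht).2.2.2,
    fun x => by have := hp.reverse x; rw [e] at this; omega⟩,
    by simp [HalfPeriod.steps], rfl⟩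

section
variable {hp : HalfPeriod 30} {S : SD} (hpos : S.pos = hp.pos)
include hpos

theorem gate_iff {t : ℕ} (ht : t < S.N) (i : ℕ) : hp.GateAt t i ↔ S.G t = i := by
  unfold HalfPeriod.GateAt
  rw [← hpos]
  constructor
  · rintro ⟨x, y, h1, h2, h3, h4⟩
    have := (S.order_change ht (x := x) (y := y) (by omega) (by omega)).1
    unfold SD.G
    rw [this, h1]
  · rintro rfl
    exact ⟨S.X t, S.Y t, rfl, S.hY t ht, S.hX1 t ht, S.hY1 t ht⟩

theorem moved_iff {t : ℕ} (ht : t < S.N) (x : Fin 30) :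
    hp.Moved t x ↔ x = S.X t ∨ x = S.Y t := by
  unfold HalfPeriod.Moved
  rw [← hpos]
  rcases S.step_cases ht x with ⟨a, b, c⟩ | ⟨a, b, c⟩ | ⟨a, a', c⟩
  · exact ⟨fun _ => Or.inl a, fun _ => by omega⟩
  · exact ⟨fun _ => Or.inr a, fun _ => by omega⟩
  · exact ⟨fun h => absurd c h, fun h => by rcases h with h | h <;> contradiction⟩

theorem swaps_XY {t : ℕ} (ht : t < S.N) : hp.SwapsAt t (S.X t) (S.Y t) :=
  ⟨S.X_ne_Y ht, (moved_iff hpos ht _).2 (Or.inl rfl), (moved_iff hpos ht _).2 (Or.inr rfl)⟩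

theorem swaps_YX {t : ℕ} (ht : t < S.N) : hp.SwapsAt t (S.Y t) (S.X t) :=
  ⟨(S.X_ne_Y ht).symm, (moved_iff hpos ht _).2 (Or.inr rfl), (moved_iff hpos ht _).2 (Or.inl rfl)⟩

theorem NLe_eq (hN : S.N = HalfPeriod.steps 30) (k : ℕ) (hk : k ≤ 14) :
    (hp.NLe k : ℤ) = ∑ t ∈ Finset.range S.N, SD.K k (S.G t) := by
  have hset : {t : ℕ | t < HalfPeriod.steps 30 ∧ hp.LeCritical t k} =
      ((Finset.range S.N).filter (fun t => S.G t ≤ k ∨ 30 - k ≤ S.G t) : Finset ℕ) := by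
    ext t
    simp only [Set.mem_setOf_eq, Finset.coe_filter, Finset.mem_range, ← hN]
    apply and_congr_right
    intro ht
    have hm := S.G_mem ht
    unfold HalfPeriod.LeCritical HalfPeriod.Critical
    simp only [gate_iff hpos ht]
    constructor
    · rintro ⟨i, h1, h2, h3 | h3⟩ <;> omega
    · rintro (h | h)
      · exact ⟨S.G t, hm.1, h, Or.inl rfl⟩
      · exact ⟨30 - S.G t, by omega, by omega, Or.inr (by omega)⟩
  unfold HalfPeriod.NLe
  rw [hset, Set.ncard_coe_finset, Finset.card_filter]
  push_cast
  rfl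

end

/-- If `N_15^{aa}(Π) = 19`, then in the arrangement of `Π` immediately
after the swap in which `a_10` enters the 13-center, the elements occupying positions
`11` and `20` are `a_1` and `a_2`, in one of the two possible orders. -/
theorem a1_a2_at_boundary (hp : HalfPeriod 30) (a b c : Fin 10 → Fin 30)
    (h3 : IsThreeDecompLabeling30 hp a b c)
    (hN1 : ∀ k : ℕ, 1 ≤ k → k ≤ 10 → hp.NLe k = 3 * Nat.choose (k + 1) 2)
    (hN2 : ∀ k : ℕ, 11 ≤ k → k ≤ 13 →
      hp.NLe k = 3 * Nat.choose (k + 1) 2 + 3 * Nat.choose (k - 9) 2)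
    (h19 : N15Mono hp a = 19)
    (t : ℕ) (ht : EntersCenterAt hp 13 (a 9) t) :
    (hp.pos (t + 1) (a 0) = 11 ∧ hp.pos (t + 1) (a 1) = 20) ∨
    (hp.pos (t + 1) (a 1) = 11 ∧ hp.pos (t + 1) (a 0) = 20) := by
  obtain ⟨S, hN, hpos⟩ := exists_SD hp
  obtain ⟨-, ha, hb, hc, hAB, -⟩ := h3
  obtain ⟨htN, hin, hout, hfirst⟩ := ht
  rw [← hN] at htN
  have ha' : ∀ i : Fin 10, S.pos 0 (a i) = 10 - (i : ℕ) := by rw [hpos]; exact ha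
  have hb' : ∀ i : Fin 10, S.pos 0 (b i) = 11 + (i : ℕ) := by rw [hpos]; exact hb
  have hc' : ∀ i : Fin 10, S.pos 0 (c i) = 21 + (i : ℕ) := by rw [hpos]; exact hc
  have inj0 := S.inj 0 (by omega)
  have oa : ∀ x, S.cl x = 0 → ∃ i, x = a i := by
    intro x hx
    have m := S.mem 0 (by omega) x
    unfold SD.cl at hx
    refine ⟨⟨10 - S.pos 0 x, by omega⟩, inj0 ?_⟩
    rw [ha']
    simp only
    omega
  have ob : ∀ x, S.cl x = 1 → ∃ i, x = b i := by
    intro x hx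
    have m := S.mem 0 (by omega) x
    unfold SD.cl at hx
    refine ⟨⟨S.pos 0 x - 11, by omega⟩, inj0 ?_⟩
    rw [hb']
    simp only
    omega
  have oc : ∀ x, S.cl x = 2 → ∃ i, x = c i := by
    intro x hx
    have m := S.mem 0 (by omega) x
    unfold SD.cl at hx
    refine ⟨⟨S.pos 0 x - 21, by omega⟩, inj0 ?_⟩
    rw [hc']
    simp only
    omega
  have cla : ∀ i, S.cl (a i) = 0 := by
    intro i
    unfold SD.cl
    rw [ha']
    omega
  obtain ⟨H, hH⟩ := S.exists_thr (by
    intro s t hs ht h0 h1 h2 h3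
    apply hAB s t (hN ▸ hs) (hN ▸ ht)
    · obtain ⟨i, hi⟩ := oa _ h0
      obtain ⟨j, hj⟩ := ob _ h1
      refine ⟨i, j, ?_⟩
      rw [← hi, ← hj]
      exact swaps_XY hpos hs
    · obtain ⟨i, hi⟩ := oc _ h3
      refine ⟨i, S.X t, ?_, ?_⟩
      · have := S.cl_lt (S.X t)
        rcases (by omega : S.cl (S.X t) = 0 ∨ S.cl (S.X t) = 1) with h | h
        · exact Or.inl (oa _ h)
        · exact Or.inr (ob _ h)
      · rw [← hi]
        exact swaps_YX hpos ht)
  have s10 : ∑ t ∈ Finset.range S.N, SD.K 10 (S.G t) = 165 := by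
    rw [← NLe_eq hpos hN 10 (by norm_num), hN1 10 (by norm_num) (by norm_num)]
    rfl
  have s13 : ∑ t ∈ Finset.range S.N, SD.K 13 (S.G t) = 291 := by
    rw [← NLe_eq hpos hN 13 (by norm_num), hN2 13 (by norm_num) (by norm_num)]
    rfl
  obtain ⟨D, hD⟩ := S.exists_AD H hH s10 s13 a ha'
  have hlow : ∀ s, s ≤ t → S.pos s (a 9) ≤ 13 := by
    intro s
    induction s with
    | zero =>
      intro _
      have h := ha' 9
      rw [show ((9 : Fin 10) : ℕ) = 9 from rfl] at h
      omega
    | succ s ih =>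
      intro hs
      have ih := ih (by omega)
      have hf := hfirst s (by omega)
      rw [← hpos] at hf
      unfold InCenter at hf
      rcases S.step_cases (t := s) (by omega) (a 9) with ⟨x, y, z⟩ | ⟨x, y, z⟩ | ⟨x, y, z⟩ <;>
        omega
  have h9 : S.pos (t + 1) (D.a 9) = 14 := by
    rw [hD]
    have h := hlow t le_rfl
    rw [← hpos] at hin
    unfold InCenter at hin
    rcases S.step_cases htN (a 9) with ⟨x, y, z⟩ | ⟨x, y, z⟩ | ⟨x, y, z⟩ <;> omega
  have key := D.core (τ := t + 1) (by omega) h9 (by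
    rw [← h19]
    unfold N15Mono
    rw [← Set.ncard_coe_finset]
    apply Set.ncard_le_ncard _ (Finset.finite_toSet _)
    rintro r ⟨h1, h2, i, j, h3, h4, h5⟩
    rw [← hN] at h1
    rw [gate_iff hpos h1] at h2
    rw [moved_iff hpos h1] at h4 h5
    simp only [Finset.coe_filter, Finset.mem_Ico, Set.mem_setOf_eq]
    refine ⟨⟨by omega, h1⟩, h2, ?_⟩
    rcases h4 with h4 | h4 <;> rcases h5 with h5 | h5
    · exact absurd (h4.trans h5.symm) h3
    · rw [← h4, ← h5, cla, cla]; exact ⟨rfl, rfl⟩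
    · rw [← h4, ← h5, cla, cla]; exact ⟨rfl, rfl⟩
    · exact absurd (h4.trans h5.symm) h3)
  rw [hD, hpos] at key
  exact key
end
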